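/- There exist constants c > 0 and C ≥ 1 such that for every integer n ≥ 2 there is a 2-SAT formula Φ with at most C·n variables and at most C·n clauses, each clause containing exactly two literals, such that every extended formulation of SAT(Φ) has size at least 2^{c·n/log n}, i.e., xc(SAT(Φ)) ≥ 2^{c·n/log n}. -/

import Mathlib

open Finset

noncomputable section

/-- An extended formulation of size `k` (number of inequalities) for `P ⊆ ℝ^ι`. -/
def IsEF {ι : Type} [Fintype ι] (P : Set (ι → ℝ)) (k : ℕ) : Prop :=
  ∃ (e l : ℕ) (A : Matrix (Fin k) (Fin e) ℝ) (b : Fin k → ℝ)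
    (C : Matrix (Fin l) (Fin e) ℝ) (d : Fin l → ℝ)
    (π : (Fin e → ℝ) →ᵃ[ℝ] (ι → ℝ)),
    π '' {y | (∀ r, A.mulVec y r ≤ b r) ∧ (∀ r, C.mulVec y r = d r)} = P

/-- The extension complexity of `P`. -/
noncomputable def xc {ι : Type} [Fintype ι] (P : Set (ι → ℝ)) : ℕ :=
  sInf {k | IsEF P k}

/-- A 2-SAT formula over variables `V`: a list of clauses, each clause being a pair of
literals, where a literal is a variable together with a sign. -/
structure TwoSAT (V : Type) where
  clauses : List ((V × Bool) × (V × Bool))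

/-- A literal `l = (v, s)` is satisfied by the assignment `a` if `a v = s`. -/
def litSat {V : Type} (a : V → Bool) (l : V × Bool) : Prop := a l.1 = l.2

/-- An assignment satisfies the formula if every clause has a satisfied literal. -/
def TwoSAT.Sat {V : Type} (Φ : TwoSAT V) (a : V → Bool) : Prop :=
  ∀ cl ∈ Φ.clauses, litSat a cl.1 ∨ litSat a cl.2

/-- `SAT(Φ)`: the convex hull of all satisfying assignments, viewed as 0/1 vectors. -/
def SATpoly {V : Type} [Fintype V] (Φ : TwoSAT V) : Set (V → ℝ) :=
  convexHull ℝ {x | ∃ a : V → Bool, Φ.Sat a ∧ x = fun v => if a v then (1 : ℝ) else 0}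

/-- **Farkas' lemma** for finitely many linear functionals. -/
theorem exists_nonneg_combination_of_forall_nonneg {W : Type*} [AddCommGroup W] [Module ℝ W]
    (m : ℕ) (a : Fin m → W →ₗ[ℝ] ℝ) (b : W →ₗ[ℝ] ℝ)
    (h : ∀ x, (∀ i, 0 ≤ a i x) → 0 ≤ b x) :
    ∃ c : Fin m → ℝ, (∀ i, 0 ≤ c i) ∧ b = ∑ i, c i • a i := by
  induction m generalizing b with
  | zero =>
    refine ⟨fun _ => 0, by simp, ?_⟩
    ext x
    have h1 := h x (fun i => i.elim0)
    have h2 := h (-x) (fun i => i.elim0)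
    simp only [map_neg] at h2
    simp only [univ_eq_empty, sum_empty, LinearMap.zero_apply]
    linarith
  | succ m ih =>
    by_cases hb : ∀ x, (∀ i : Fin m, 0 ≤ a i.castSucc x) → 0 ≤ b x
    · obtain ⟨c, hc, hbc⟩ := ih (fun i => a i.castSucc) b hb
      refine ⟨Fin.snoc c 0, fun i => ?_, ?_⟩
      · refine Fin.lastCases (by simp) (fun i => by simpa using hc i) i
      · simp [Fin.sum_univ_castSucc, hbc]
    · push Not at hb
      obtain ⟨x₀, hx₀, hbx₀⟩ := hb
      have hl : a (Fin.last m) x₀ < 0 := by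
        by_contra hcon
        push Not at hcon
        exact absurd (h x₀ fun i => Fin.lastCases hcon hx₀ i) (not_le.2 hbx₀)
      set t := a (Fin.last m) x₀ with ht
      let p : (W →ₗ[ℝ] ℝ) → (W →ₗ[ℝ] ℝ) := fun f => f - (f x₀ / t) • a (Fin.last m)
      have hp : ∀ f x, p f x = f (x - (a (Fin.last m) x / t) • x₀) := by
        intro f x
        simp only [p, LinearMap.sub_apply, LinearMap.smul_apply, smul_eq_mul, map_sub, map_smul]
        ring
      obtain ⟨c, hc, hbc⟩ := ih (fun i => p (a i.castSucc)) (p b) (by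
        intro x hx
        rw [hp]
        refine h _ fun i => Fin.lastCases ?_ (fun i => by rw [← hp]; exact hx i) i
        simp only [map_sub, map_smul, smul_eq_mul, ← ht]
        rw [div_mul_cancel₀ _ hl.ne, sub_self])
      refine ⟨Fin.snoc c ((b x₀ - ∑ i, c i * a i.castSucc x₀) / t), fun i => ?_, ?_⟩
      · refine Fin.lastCases ?_ (fun i => by simpa using hc i) i
        simp only [Fin.snoc_last]
        refine div_nonneg_of_nonpos ?_ hl.le
        have : 0 ≤ ∑ i, c i * a i.castSucc x₀ :=
          Finset.sum_nonneg fun i _ => mul_nonneg (hc i) (hx₀ i)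
        linarith
      · ext x
        have hx := LinearMap.congr_fun hbc x
        simp only [p, LinearMap.sub_apply, LinearMap.smul_apply, smul_eq_mul,
          LinearMap.sum_apply, mul_sub, Finset.sum_sub_distrib] at hx
        simp only [Fin.sum_univ_castSucc, Fin.snoc_castSucc, Fin.snoc_last,
          LinearMap.add_apply, LinearMap.sum_apply, LinearMap.smul_apply, smul_eq_mul]
        have : ∑ i, c i * (a i.castSucc x₀ / t * a (Fin.last m) x) =
            (∑ i, c i * a i.castSucc x₀) / t * a (Fin.last m) x := by
          rw [Finset.sum_div, Finset.sum_mul]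
          exact Finset.sum_congr rfl fun i _ => by ring
        rw [this] at hx
        rw [sub_div, sub_mul]
        linarith

/-- Affine form of Farkas' lemma over a nonempty polyhedron. -/
theorem exists_affine_nonneg_combination {W : Type*} [AddCommGroup W] [Module ℝ W]
    (m : ℕ) (a : Fin m → W →ₗ[ℝ] ℝ) (r : Fin m → ℝ) (b : W →ₗ[ℝ] ℝ) (s : ℝ) (y₀ : W)
    (hy₀ : ∀ i, 0 ≤ a i y₀ + r i)
    (h : ∀ x, (∀ i, 0 ≤ a i x + r i) → 0 ≤ b x + s) :
    ∃ (c₀ : ℝ) (c : Fin m → ℝ), 0 ≤ c₀ ∧ (∀ i, 0 ≤ c i) ∧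
      ∀ x, b x + s = c₀ + ∑ i, c i * (a i x + r i) := by
  let hom : (W →ₗ[ℝ] ℝ) → ℝ → (W × ℝ →ₗ[ℝ] ℝ) := fun f u =>
    f ∘ₗ LinearMap.fst ℝ W ℝ + u • LinearMap.snd ℝ W ℝ
  have hhom : ∀ f u x τ, hom f u (x, τ) = f x + u * τ := fun f u x τ => by simp [hom]
  obtain ⟨c, hc, hbc⟩ := exists_nonneg_combination_of_forall_nonneg (m + 1)
    (Fin.snoc (fun i => hom (a i) (r i)) (hom 0 1)) (hom b s) (by
      rintro ⟨x, τ⟩ hx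
      have hτ : 0 ≤ τ := by simpa [hhom] using hx (Fin.last m)
      have hx' : ∀ i, 0 ≤ a i x + r i * τ := fun i => by simpa [hhom] using hx i.castSucc
      rw [hhom]
      rcases hτ.eq_or_lt with rfl | hτ
      · simp only [mul_zero, add_zero] at hx' ⊢
        by_contra hneg
        push Not at hneg
        have h1 := h (y₀ + ((b y₀ + s + 1) / -b x) • x) (fun i => by
          have h0 := h y₀ hy₀
          have : 0 ≤ (b y₀ + s + 1) / -b x := div_nonneg (by linarith) (by linarith)
          have := mul_nonneg this (hx' i)
          simp only [map_add, map_smul, smul_eq_mul]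
          linarith [hy₀ i])
        simp only [map_add, map_smul, smul_eq_mul] at h1
        rw [div_neg, neg_mul, div_mul_cancel₀ _ hneg.ne] at h1
        linarith
      · have h1 := h (τ⁻¹ • x) (fun i => by
          have := mul_nonneg (inv_nonneg.2 hτ.le) (hx' i)
          rw [mul_add, mul_comm (r i), ← mul_assoc, inv_mul_cancel₀ hτ.ne'] at this
          simpa using this)
        have := mul_nonneg hτ.le h1
        rw [map_smul, smul_eq_mul, mul_add, ← mul_assoc, mul_inv_cancel₀ hτ.ne'] at this
        linarith)
  refine ⟨c (Fin.last m), fun i => c i.castSucc, hc _, fun i => hc _, fun x => ?_⟩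
  have hx := LinearMap.congr_fun hbc (x, 1)
  rw [Fin.sum_univ_castSucc] at hx
  simp only [LinearMap.add_apply, LinearMap.sum_apply, LinearMap.smul_apply, Fin.snoc_castSucc,
    Fin.snoc_last, hhom, smul_eq_mul, mul_one, LinearMap.zero_apply, zero_add] at hx
  linarith

/-- One direction of Yannakakis' theorem: an extended formulation of size `k` gives a nonnegative
factorization with `k + 1` terms of any matrix of slacks. -/
theorem IsEF.exists_factorization {ι : Type} [Fintype ι] {P : Set (ι → ℝ)} {k : ℕ}
    (hP : IsEF P k) {X Y : Type*} [Nonempty X] (p : X → ι → ℝ) (hp : ∀ x, p x ∈ P)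
    (ℓ : Y → (ι → ℝ) →ᵃ[ℝ] ℝ) (hℓ : ∀ y, ∀ q ∈ P, 0 ≤ ℓ y q) :
    ∃ (f : Fin (k + 1) → X → ℝ) (g : Fin (k + 1) → Y → ℝ),
      (∀ r x, 0 ≤ f r x) ∧ (∀ r y, 0 ≤ g r y) ∧ ∀ x y, ℓ y (p x) = ∑ r, f r x * g r y := by
  obtain ⟨e, l, A, b, C, d, π, rfl⟩ := hP
  choose z hz hzp using hp
  have hm : ∃ (m : ℕ), Nonempty (Fin m ≃ Fin k ⊕ Fin l ⊕ Fin l) := ⟨_, ⟨(Fintype.equivFin _).symm⟩⟩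
  obtain ⟨m, ⟨φ⟩⟩ := hm
  let rowA : Fin k → (Fin e → ℝ) →ₗ[ℝ] ℝ := fun i => LinearMap.proj i ∘ₗ A.mulVecLin
  let rowC : Fin l → (Fin e → ℝ) →ₗ[ℝ] ℝ := fun i => LinearMap.proj i ∘ₗ C.mulVecLin
  let a : Fin k ⊕ Fin l ⊕ Fin l → (Fin e → ℝ) →ₗ[ℝ] ℝ :=
    Sum.elim (fun i => -rowA i) (Sum.elim (fun i => -rowC i) rowC)
  let r : Fin k ⊕ Fin l ⊕ Fin l → ℝ := Sum.elim b (Sum.elim d (fun i => -d i))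
  have mem : ∀ w, (∀ i, 0 ≤ a (φ i) w + r (φ i)) →
      (∀ i, A.mulVec w i ≤ b i) ∧ (∀ i, C.mulVec w i = d i) := by
    intro w hw
    have hw' : ∀ i, 0 ≤ a i w + r i := fun i => by simpa using hw (φ.symm i)
    refine ⟨fun i => ?_, fun i => le_antisymm ?_ ?_⟩
    · have := hw' (Sum.inl i)
      simp only [a, r, rowA, Sum.elim_inl, LinearMap.neg_apply, LinearMap.comp_apply,
        Matrix.mulVecLin_apply, LinearMap.proj_apply] at this
      linarith
    · have := hw' (Sum.inr (Sum.inl i))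
      simp only [a, r, rowC, Sum.elim_inl, Sum.elim_inr, LinearMap.neg_apply,
        LinearMap.comp_apply, Matrix.mulVecLin_apply, LinearMap.proj_apply] at this
      linarith
    · have := hw' (Sum.inr (Sum.inr i))
      simp only [a, r, rowC, Sum.elim_inr,
        LinearMap.comp_apply, Matrix.mulVecLin_apply, LinearMap.proj_apply] at this
      linarith
  have slack : ∀ w, ((∀ i, A.mulVec w i ≤ b i) ∧ (∀ i, C.mulVec w i = d i)) →
      (∀ i, a (Sum.inl i) w + r (Sum.inl i) = b i - A.mulVec w i) ∧
      (∀ i, a (Sum.inr i) w + r (Sum.inr i) = 0) := by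
    intro w hw
    refine ⟨fun i => ?_, fun i => ?_⟩
    · simp only [a, r, rowA, Sum.elim_inl, LinearMap.neg_apply, LinearMap.comp_apply,
        Matrix.mulVecLin_apply, LinearMap.proj_apply]
      ring
    · rcases i with i | i <;>
      simp only [a, r, rowC, Sum.elim_inl, Sum.elim_inr, LinearMap.neg_apply,
        LinearMap.comp_apply, Matrix.mulVecLin_apply, LinearMap.proj_apply, hw.2 i] <;>
      ring
  have key : ∀ y, ∃ (c₀ : ℝ) (c : Fin m → ℝ), 0 ≤ c₀ ∧ (∀ i, 0 ≤ c i) ∧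
      ∀ w, ℓ y (π w) = c₀ + ∑ i, c i * (a (φ i) w + r (φ i)) := by
    intro y
    let L : (Fin e → ℝ) →ᵃ[ℝ] ℝ := (ℓ y).comp π
    have hL : ∀ w, L.linear w + L 0 = ℓ y (π w) := fun w => by
      have := congrFun L.decomp w
      simpa [L] using this.symm
    obtain ⟨x₀⟩ := ‹Nonempty X›
    obtain ⟨c₀, c, h0, h1, h2⟩ := exists_affine_nonneg_combination m (fun i => a (φ i))
      (fun i => r (φ i)) L.linear (L 0) (z x₀) (fun i => by
        rcases hi : φ i with j | j
        · rw [(slack _ (hz x₀)).1 j]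
          linarith [(hz x₀).1 j]
        · rw [(slack _ (hz x₀)).2 j])
      (fun w hw => by
        rw [hL]
        exact hℓ y _ ⟨w, mem w hw, rfl⟩)
    exact ⟨c₀, c, h0, h1, fun w => by rw [← hL, h2]⟩
  choose c₀ c hc₀ hc hfac using key
  refine ⟨Fin.snoc (fun i x => b i - A.mulVec (z x) i) (fun _ => 1),
    Fin.snoc (fun i y => c y (φ.symm (Sum.inl i))) c₀, fun i x => ?_, fun i y => ?_,
    fun x y => ?_⟩
  · refine Fin.lastCases (by simp) (fun i => ?_) i
    simp only [Fin.snoc_castSucc]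
    linarith [(hz x).1 i]
  · refine Fin.lastCases (by simpa using hc₀ y) (fun i => ?_) i
    simpa using hc y _
  · rw [← hzp, hfac, ← φ.symm.sum_comp, Fintype.sum_sum_type, Fin.sum_univ_castSucc]
    simp only [Equiv.apply_symm_apply, (slack _ (hz x)).1, (slack _ (hz x)).2, mul_zero,
      Finset.sum_const_zero, add_zero, Fin.snoc_castSucc, Fin.snoc_last, one_mul]
    rw [add_comm]
    exact congrArg (· + c₀ y) (Finset.sum_congr rfl fun i _ => mul_comm _ _)

/-- The convex hull of finitely many points has an extended formulation. -/
theorem exists_isEF_convexHull {ι : Type} [Fintype ι] {s : Set (ι → ℝ)} (hs : s.Finite) :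
    ∃ k, IsEF (convexHull ℝ s) k := by
  obtain ⟨k, p, -, rfl⟩ := hs.fin_param
  refine ⟨k, k, 1, -1, 0, fun _ _ => 1, 1, (Fintype.linearCombination ℝ p).toAffineMap, ?_⟩
  have h1 : Set.range p = Fintype.linearCombination ℝ p '' Set.range fun i => Pi.single i (1 : ℝ) := by
    rw [← Set.range_comp]
    congr 1
    ext1 i
    simp [Fintype.linearCombination_apply_single]
  have h2 : {y : Fin k → ℝ | (∀ r, (-1 : Matrix (Fin k) (Fin k) ℝ).mulVec y r ≤ (0 : Fin k → ℝ) r) ∧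
      ∀ r : Fin 1, Matrix.mulVec (fun _ _ => 1) y r = (1 : Fin 1 → ℝ) r} =
      convexHull ℝ (Set.range fun i => Pi.single i (1 : ℝ)) := by
    rw [convexHull_rangle_single_eq_stdSimplex]
    ext y
    simp +contextual [stdSimplex, Matrix.mulVec, dotProduct, Matrix.one_apply]
  rw [h2, h1]
  exact (Fintype.linearCombination ℝ p).image_convexHull _
open BigOperators

section Cube

variable {ι κ : Type*} [DecidableEq ι]

/-- The point `a` restricted to the support of `σ`, with value `q` at `j`. -/
def pin (σ a : ι → Bool) (j : ι) (q : Bool) : ι → Bool :=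
  fun u => if u = j then q else (a u && σ u)

theorem pin_update (σ a : ι → Bool) (j : ι) (q c : Bool) :
    pin (Function.update σ j c) a j q = pin σ a j q := by
  ext u
  by_cases h : u = j <;> simp [pin, h]

theorem update_and_eq_pin {σ : ι → Bool} {j : ι} (hj : σ j = true) (a : ι → Bool) (c : Bool) :
    (fun u => Function.update a j c u && σ u) = pin σ a j c := by
  ext u
  by_cases h : u = j
  · subst h; simp [pin, hj]
  · simp [pin, h]

variable [Fintype ι] [Fintype κ]

/-- Resampling one coordinate does not change the average of a function. -/
theorem expect_expect_update [Nonempty κ] (i : ι) (φ : (ι → κ) → ℝ) :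
    𝔼 a, 𝔼 c, φ (Function.update a i c) = 𝔼 a, φ a := by
  have h : 𝔼 x : (ι → κ) × κ, φ (Function.update x.1 i x.2) = 𝔼 x : (ι → κ) × κ, φ x.1 := by
    let T : (ι → κ) × κ → (ι → κ) × κ := fun x => (Function.update x.1 i x.2, x.1 i)
    have hT : Function.Involutive T := fun x => by simp [T]
    exact Fintype.expect_equiv hT.toPerm _ _ fun x => rfl
  have h1 := Finset.expect_product' (univ : Finset (ι → κ)) (univ : Finset κ)
    fun a c => φ (Function.update a i c)
  have h2 := Finset.expect_product' (univ : Finset (ι → κ)) (univ : Finset κ)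
    fun a _ => φ a
  rw [univ_product_univ] at h1 h2
  rw [← h1, h, h2]
  simp

/-- The average of `f` over the points supported in `σ`. -/
def subcubeMean (f : (ι → Bool) → ℝ) (σ : ι → Bool) : ℝ := 𝔼 a : ι → Bool, f fun u => a u && σ u

/-- The average of `f` over the points supported in `σ` away from `j` with value `q` at `j`. -/
def pinnedMean (f : (ι → Bool) → ℝ) (σ : ι → Bool) (j : ι) (q : Bool) : ℝ :=
  𝔼 a : ι → Bool, f (pin σ a j q)

theorem pinnedMean_update (f : (ι → Bool) → ℝ) (σ : ι → Bool) (j : ι) (q c : Bool) :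
    pinnedMean f (Function.update σ j c) j q = pinnedMean f σ j q := by
  simp only [pinnedMean, pin_update]

theorem expect_bool (φ : Bool → ℝ) : 𝔼 c, φ c = (φ true + φ false) / 2 := by
  rw [Fintype.expect_eq_sum_div_card]
  simp

theorem expect_mul_ite_eq (j : ι) (q : Bool) (φ : (ι → Bool) → ℝ)
    (h : ∀ σ c, φ (Function.update σ j c) = φ σ) :
    𝔼 σ : ι → Bool, (if σ j = q then φ σ else 0) = (𝔼 σ, φ σ) / 2 := by
  rw [← expect_expect_update j, expect_div]
  refine Finset.expect_congr rfl fun σ _ => ?_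
  rw [expect_bool]
  cases q <;> simp [h]

theorem pinnedMean_add {f : (ι → Bool) → ℝ} {σ : ι → Bool} {j : ι} (hj : σ j = true) :
    pinnedMean f σ j false + pinnedMean f σ j true = 2 * subcubeMean f σ := by
  rw [subcubeMean, ← expect_expect_update j]
  simp only [update_and_eq_pin hj, expect_bool, ← expect_div, expect_add_distrib]
  simp only [pinnedMean]
  ring

theorem pinnedMean_false {f : (ι → Bool) → ℝ} {σ : ι → Bool} {j : ι} (hj : σ j = false) :
    pinnedMean f σ j false = subcubeMean f σ := by
  simp only [pinnedMean, subcubeMean]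
  congr 1
  ext a
  congr 1
  ext u
  by_cases h : u = j
  · subst h; simp [pin, hj]
  · simp [pin, h]

/-- The sign character of the coordinate `j`. -/
def chi (a : ι → Bool) (j : ι) : ℝ := if a j then -1 else 1

theorem expect_mul_chi {f : (ι → Bool) → ℝ} {σ : ι → Bool} {j : ι} (hj : σ j = true) :
    𝔼 a : ι → Bool, f (fun u => a u && σ u) * chi a j =
      (pinnedMean f σ j false - pinnedMean f σ j true) / 2 := by
  rw [← expect_expect_update j]
  simp only [update_and_eq_pin hj, expect_bool, ← expect_div, expect_add_distrib, chi,
    Function.update_self]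
  simp only [pinnedMean, mul_neg, if_true, Bool.false_eq_true, if_false, mul_one, expect_neg_distrib]
  ring

theorem expect_exp_sum_chi_le (c : ι → ℝ) :
    𝔼 a : ι → Bool, Real.exp (∑ j, c j * chi a j) ≤ Real.exp (∑ j, c j ^ 2 / 2) := by
  have h : 𝔼 a : ι → Bool, Real.exp (∑ j, c j * chi a j) = ∏ j, Real.cosh (c j) := by
    simp only [Real.exp_sum, chi]
    rw [Fintype.expect_eq_sum_div_card]
    rw [← Fintype.prod_sum (fun j (b : Bool) => Real.exp (c j * if b then -1 else 1))]
    simp only [Fintype.sum_bool, Real.cosh_eq, Finset.prod_div_distrib, Finset.prod_const]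
    simp [add_comm]
  rw [h, Real.exp_sum]
  exact Finset.prod_le_prod (fun j _ => (Real.cosh_pos _).le) fun j _ => Real.cosh_le_exp_half_sq _

/-- A level-one inequality for functions on a subcube. -/
theorem sum_abs_pinnedMean_sub_le {f : (ι → Bool) → ℝ} (h0 : ∀ a, 0 ≤ f a) (h1 : ∀ a, f a ≤ 1)
    (σ : ι → Bool) {t : ℝ} (ht : 0 < t) :
    ∑ j, (if σ j = true then |pinnedMean f σ j false - pinnedMean f σ j true| else 0) ≤
      2 * t * Fintype.card ι * subcubeMean f σ +
        2 / t * Real.exp (-(t ^ 2 / 2 * Fintype.card ι)) := by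
  set N : ℝ := (Fintype.card ι : ℝ) with hN
  set δ : ι → ℝ := fun j => pinnedMean f σ j false - pinnedMean f σ j true with hδ
  let c : ι → ℝ := fun j => if σ j = true then (if 0 ≤ δ j then t else -t) else 0
  have hc : ∀ j, c j ^ 2 / 2 ≤ t ^ 2 / 2 := fun j => by
    simp only [c]
    split_ifs
    · exact le_rfl
    · simp
    · nlinarith [sq_nonneg t]
  have hcδ : ∀ j, (if σ j = true then |δ j| else 0) =
      2 / t * (𝔼 a : ι → Bool, f (fun u => a u && σ u) * (c j * chi a j)) := fun j => by
    by_cases hj : σ j = true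
    · have : 𝔼 a : ι → Bool, f (fun u => a u && σ u) * (c j * chi a j) = c j * (δ j / 2) := by
        rw [← expect_mul_chi hj, mul_expect]
        exact Finset.expect_congr rfl fun a _ => by ring
      rw [this]
      simp only [c, hj, if_true]
      split_ifs with hs
      · rw [abs_of_nonneg hs]; field_simp
      · rw [abs_of_neg (not_le.1 hs)]; field_simp
    · simp [c, hj]
  rw [Finset.sum_congr rfl fun j _ => hcδ j, ← Finset.mul_sum, ← expect_sum_comm]
  have hle : 𝔼 a : ι → Bool, ∑ j, f (fun u => a u && σ u) * (c j * chi a j) ≤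
      N * t ^ 2 * subcubeMean f σ + Real.exp (-(t ^ 2 / 2 * N)) := by
    calc 𝔼 a : ι → Bool, ∑ j, f (fun u => a u && σ u) * (c j * chi a j)
        ≤ 𝔼 a : ι → Bool, (N * t ^ 2 * f (fun u => a u && σ u) +
            Real.exp (∑ j, c j * chi a j) * Real.exp (-(N * t ^ 2))) := by
          refine Finset.expect_le_expect fun a _ => ?_
          rw [← Finset.mul_sum, ← Real.exp_add]
          set L := ∑ j, c j * chi a j
          have e1 := Real.add_one_le_exp (L + -(N * t ^ 2))
          have e2 := h0 fun u => a u && σ u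
          have e3 := h1 fun u => a u && σ u
          have e4 := Real.exp_pos (L + -(N * t ^ 2))
          nlinarith
      _ = N * t ^ 2 * subcubeMean f σ +
            (𝔼 a : ι → Bool, Real.exp (∑ j, c j * chi a j)) * Real.exp (-(N * t ^ 2)) := by
          rw [expect_add_distrib, ← mul_expect, ← expect_mul, subcubeMean]
      _ ≤ _ := by
          have e1 : 𝔼 a : ι → Bool, Real.exp (∑ j, c j * chi a j) ≤ Real.exp (N * (t ^ 2 / 2)) := by
            refine (expect_exp_sum_chi_le c).trans (Real.exp_le_exp.2 ?_)
            refine (Finset.sum_le_sum fun j _ => hc j).trans ?_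
            simp [hN]
          have e2 := mul_le_mul_of_nonneg_right e1 (Real.exp_pos (-(N * t ^ 2))).le
          rw [← Real.exp_add] at e2
          refine add_le_add le_rfl (e2.trans (le_of_eq ?_))
          congr 1
          ring
  calc _ ≤ 2 / t * (N * t ^ 2 * subcubeMean f σ + Real.exp (-(t ^ 2 / 2 * N))) :=
        mul_le_mul_of_nonneg_left hle (by positivity)
    _ = _ := by field_simp

end Cube

section CubeGap

variable {ι : Type*} [Fintype ι] [DecidableEq ι]

/-- The slack in the estimate of the two one-sided errors by the main term. -/
def gap (θ a₀ a₁ b₀ b₁ : ℝ) : ℝ :=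
  1 / 10 * (a₀ * b₀) + 5 * θ - max (a₀ - a₁) 0 * b₀ - a₀ * max (b₀ - b₁) 0

/-- The error term in the level-one inequality. -/
def smallError (N : ℕ) : ℝ := 200 * Real.exp (-(N / 20000 : ℝ))

theorem smallError_pos (N : ℕ) : 0 < smallError N := by
  unfold smallError; positivity

theorem expect_nonneg_of_nonneg {α : Type*} [Fintype α] {φ : α → ℝ} (h : ∀ a, 0 ≤ φ a) :
    0 ≤ 𝔼 a, φ a :=
  Finset.expect_nonneg fun a _ => h a

theorem expect_le_one {α : Type*} [Fintype α] [Nonempty α] {φ : α → ℝ} (h : ∀ a, φ a ≤ 1) :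
    𝔼 a, φ a ≤ 1 :=
  Finset.expect_le univ_nonempty fun a _ => h a

/-- Among random pairs of complementary subcubes, pinning a random coordinate to `true` instead
of `false` rarely decreases the means by a constant factor. -/
theorem expect_gap_nonneg [Nonempty ι] {f g : (ι → Bool) → ℝ} (hf0 : ∀ a, 0 ≤ f a)
    (hf1 : ∀ a, f a ≤ 1) (hg0 : ∀ a, 0 ≤ g a) (hg1 : ∀ a, g a ≤ 1) :
    0 ≤ 𝔼 σ : ι → Bool, 𝔼 j, gap (smallError (Fintype.card ι))
      (pinnedMean f σ j false) (pinnedMean f σ j true)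
      (pinnedMean g (fun u => !σ u) j false) (pinnedMean g (fun u => !σ u) j true) := by
  set N : ℝ := (Fintype.card ι : ℝ) with hN
  have hN1 : 1 ≤ N := by
    rw [hN]; exact_mod_cast Fintype.card_pos
  set θ := smallError (Fintype.card ι) with hθ
  have hθ0 : 0 < θ := smallError_pos _
  set F : (ι → Bool) → ι → Bool → ℝ := fun σ j q => pinnedMean f σ j q with hF
  set G : (ι → Bool) → ι → Bool → ℝ := fun σ j q => pinnedMean g (fun u => !σ u) j q with hG
  have hF0 : ∀ σ j q, 0 ≤ F σ j q := fun σ j q => expect_nonneg_of_nonneg fun a => hf0 _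
  have hG0 : ∀ σ j q, 0 ≤ G σ j q := fun σ j q => expect_nonneg_of_nonneg fun a => hg0 _
  have hFu : ∀ σ j q c, F (Function.update σ j c) j q = F σ j q := fun σ j q c =>
    pinnedMean_update _ _ _ _ _
  have hGu : ∀ σ j q c, G (Function.update σ j c) j q = G σ j q := fun σ j q c => by
    have : (fun u => !(Function.update σ j c u)) = Function.update (fun u => !σ u) j (!c) := by
      ext u
      by_cases h : u = j <;> simp [h]
    simp only [hG, this, pinnedMean_update]
  let P : (ι → Bool) → ι → ℝ := fun σ j => max (F σ j false - F σ j true) 0 * G σ j false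
  let R : (ι → Bool) → ι → ℝ := fun σ j => F σ j false * max (G σ j false - G σ j true) 0
  let S : (ι → Bool) → ι → ℝ := fun σ j => 1 / 10 * (F σ j false * G σ j false) + 5 * θ
  have hswap : 𝔼 σ : ι → Bool, 𝔼 j, gap θ (F σ j false) (F σ j true) (G σ j false) (G σ j true) =
      𝔼 σ : ι → Bool, 𝔼 j, (S σ j - 2 * (if σ j = true then P σ j else 0)
        - 2 * (if σ j = false then R σ j else 0)) := by
    rw [expect_comm, expect_comm (f := fun (σ : ι → Bool) j =>
      (S σ j - 2 * (if σ j = true then P σ j else 0) - 2 * (if σ j = false then R σ j else 0)))]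
    refine Finset.expect_congr rfl fun j _ => ?_
    have e1 := expect_mul_ite_eq j true (fun σ => P σ j) fun σ c => by
      simp only [P, hFu, hGu]
    have e2 := expect_mul_ite_eq j false (fun σ => R σ j) fun σ c => by
      simp only [R, hFu, hGu]
    rw [expect_sub_distrib, expect_sub_distrib, ← mul_expect, ← mul_expect, e1, e2]
    simp only [gap, expect_sub_distrib, S, P, R]
    ring
  rw [hswap]
  refine expect_nonneg_of_nonneg fun σ => ?_
  set A := subcubeMean f σ with hA
  set B := subcubeMean g (fun u => !σ u) with hB
  have hA0 : 0 ≤ A := expect_nonneg_of_nonneg fun a => hf0 _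
  have hA1 : A ≤ 1 := expect_le_one fun a => hf1 _
  have hB0 : 0 ≤ B := expect_nonneg_of_nonneg fun a => hg0 _
  have hB1 : B ≤ 1 := expect_le_one fun a => hg1 _
  let dA : ι → ℝ := fun j => if σ j = true then |F σ j false - F σ j true| else 0
  let dB : ι → ℝ := fun j => if σ j = false then |G σ j false - G σ j true| else 0
  have hθ' : 2 / (1 / 100 : ℝ) * Real.exp (-((1 / 100 : ℝ) ^ 2 / 2 * Fintype.card ι)) = θ := by
    rw [hθ, smallError]
    norm_num
    ring_nf
  have hdA : ∑ j, dA j ≤ N / 50 * A + θ := by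
    have := sum_abs_pinnedMean_sub_le hf0 hf1 σ (t := 1 / 100) (by norm_num)
    rw [hθ'] at this
    refine this.trans (le_of_eq ?_)
    rw [← hN, ← hA]; ring
  have hdB : ∑ j, dB j ≤ N / 50 * B + θ := by
    have := sum_abs_pinnedMean_sub_le hg0 hg1 (fun u => !σ u) (t := 1 / 100) (by norm_num)
    rw [hθ'] at this
    simp only [Bool.not_eq_true'] at this
    refine this.trans (le_of_eq ?_)
    rw [← hN, ← hB]; ring
  have key : ∀ j, 1 / 10 * (A * B) + 5 * θ - 41 / 20 * (B * dA j) - 41 / 20 * (A * dB j) ≤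
      S σ j - 2 * (if σ j = true then P σ j else 0) - 2 * (if σ j = false then R σ j else 0) := by
    intro j
    by_cases hj : σ j = true
    · have e1 : G σ j false = B := pinnedMean_false (σ := fun u => !σ u) (by simp [hj])
      have e2 : F σ j false + F σ j true = 2 * A := pinnedMean_add hj
      have e3 : max (F σ j false - F σ j true) 0 ≤ |F σ j false - F σ j true| :=
        max_le (le_abs_self _) (abs_nonneg _)
      have e4 := mul_le_mul_of_nonneg_right e3 hB0
      have e5 := mul_le_mul_of_nonneg_right (neg_abs_le (F σ j false - F σ j true)) hB0
      have e6 : F σ j true = 2 * A - F σ j false := by linarith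
      simp only [hj, S, P, R, dA, dB, e1, if_true, Bool.true_eq_false, if_false]
      rw [e6] at e4 e5 ⊢
      nlinarith
    · have hj : σ j = false := by simpa using hj
      have e1 : F σ j false = A := pinnedMean_false hj
      have e2 : G σ j false + G σ j true = 2 * B :=
        pinnedMean_add (σ := fun u => !σ u) (by simp [hj])
      have e3 : max (G σ j false - G σ j true) 0 ≤ |G σ j false - G σ j true| :=
        max_le (le_abs_self _) (abs_nonneg _)
      have e4 := mul_le_mul_of_nonneg_left e3 hA0
      have e5 := mul_le_mul_of_nonneg_left (neg_abs_le (G σ j false - G σ j true)) hA0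
      have e6 : G σ j true = 2 * B - G σ j false := by linarith
      simp only [hj, S, P, R, dA, dB, e1, if_true, Bool.false_eq_true, if_false]
      rw [e6] at e4 e5 ⊢
      nlinarith
  refine le_trans ?_ (Finset.expect_le_expect fun j _ => key j)
  rw [Fintype.expect_eq_sum_div_card]
  refine div_nonneg ?_ (by positivity)
  rw [sum_sub_distrib, sum_sub_distrib, ← Finset.mul_sum, ← Finset.mul_sum, ← Finset.mul_sum,
    ← Finset.mul_sum, sum_const, card_univ, nsmul_eq_mul, ← hN]
  have m1 := mul_le_mul_of_nonneg_left hdA hB0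
  have m2 := mul_le_mul_of_nonneg_left hdB hA0
  have m3 : 0 ≤ N * (A * B) := by positivity
  have m4 : B * θ ≤ θ := by nlinarith
  have m5 : A * θ ≤ θ := by nlinarith
  nlinarith

end CubeGap

section Network

/-- The edge gadget on the sum of the two players' edge values. -/
def gadget (s : ZMod 4) : ZMod 2 := if s = 2 ∨ s = 3 then 1 else 0

/-- The increment by which a player applies a hidden bit to an edge value. -/
def incr (s : ZMod 4) : ZMod 4 := if s = 0 ∨ s = 2 then 1 else -1

theorem gadget_incr : ∀ (A B : Bool) (s : ZMod 4),
    gadget (s + (if A then incr s else 0) + (if B then incr s else 0)) =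
      gadget s + if A && B then 1 else 0 := by
  decide

theorem masked_pair_injective : ∀ A B : Bool, Function.Injective fun z : ZMod 4 × ZMod 4 =>
    ((z.1 + (if A then incr z.2 else 0),
      z.2 + (if A then incr z.2 else 0) + (if B then incr z.2 else 0)) : ZMod 4 × ZMod 4) := by
  unfold Function.Injective
  decide

/-- The nodes of the network: a level and a position. -/
abbrev Node (d N : ℕ) := ZMod d × ZMod N

/-- The links of one network: each node has two outgoing links, labelled by a bit. -/
abbrev Link (d N : ℕ) := Bool × Node d N

/-- The edges of five parallel copies of the network. -/
abbrev Edge (d N : ℕ) := ZMod 5 × Link d N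

/-- The edge slots at a node: the copy, the label, and whether the edge is incoming. -/
abbrev Slot := ZMod 5 × Bool × Bool

variable {d N : ℕ}

/-- The head of the outgoing link labelled `c`. -/
def step (c : Bool) : Node d N ≃ Node d N where
  toFun v := (v.1 + 1, v.2 + if c then 2 ^ v.1.val else 0)
  invFun v := (v.1 - 1, v.2 - if c then 2 ^ (v.1 - 1).val else 0)
  left_inv v := by simp
  right_inv v := by simp

/-- The edge in a given slot of a node. -/
def incident (v : Node d N) (q : Slot) : Edge d N :=
  (q.1, q.2.1, if q.2.2 then (step q.2.1).symm v else v)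

/-- The boundary of an edge chain modulo two. -/
def boundary (z : Edge d N → ZMod 2) (v : Node d N) : ZMod 2 := ∑ q : Slot, z (incident v q)

theorem boundary_add (z z' : Edge d N → ZMod 2) (v : Node d N) :
    boundary (fun e => z e + z' e) v = boundary z v + boundary z' v :=
  sum_add_distrib

theorem boundary_eq (z : Edge d N → ZMod 2) (v : Node d N) :
    boundary z v = ∑ i, ∑ c, (z (i, c, (step c).symm v) + z (i, c, v)) := by
  simp only [boundary, incident, Fintype.sum_prod_type, Fintype.sum_bool]
  simp

theorem sum_boundary [NeZero d] [NeZero N] (z : Edge d N → ZMod 2) : ∑ v, boundary z v = 0 := by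
  simp only [boundary_eq]
  rw [sum_comm]
  refine sum_eq_zero fun i _ => ?_
  rw [sum_comm]
  refine sum_eq_zero fun c _ => ?_
  rw [sum_add_distrib, Equiv.sum_comp (step c).symm fun v => z (i, c, v)]
  exact CharTwo.add_self_eq_zero _

/-- The unit chain at the position `u` of level zero. -/
def port (u : ZMod N) (v : Node d N) : ZMod 2 := if v = (0, u) then 1 else 0

theorem sum_port [NeZero d] [NeZero N] (u : ZMod N) : ∑ v : Node d N, port u v = 1 := by
  simp [port]

/-- The starting position of the path of displacement `w` through a link, if there is one. -/
def pathStart (w : ZMod N) (e : Link d N) : Option (ZMod N) :=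
  if e.1 = w.val.testBit e.2.1.val then some (e.2.2 - ((w.val % 2 ^ e.2.1.val : ℕ) : ZMod N))
  else none

/-- The indicator of the path of displacement `w` starting at `u` in the copy `i`. -/
def pathChain (i : ZMod 5) (w u : ZMod N) (e : Edge d N) : ZMod 2 :=
  if e.1 = i ∧ pathStart w e.2 = some u then 1 else 0

theorem boundary_pathChain [NeZero d] [NeZero N] (h : N ≤ 2 ^ d) (i : ZMod 5) (w u : ZMod N)
    (v : Node d N) : boundary (pathChain i w u) v = port u v + port (u + w) v := by
  obtain ⟨l, p⟩ := v
  have h1 : boundary (pathChain i w u) (l, p) =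
      ∑ c, ((if pathStart w (c, (step c).symm (l, p)) = some u then 1 else 0) +
        (if pathStart w (c, l, p) = some u then 1 else 0)) := by
    rw [boundary_eq, sum_eq_single i]
    · simp [pathChain]
    · intro j _ hj
      simp [pathChain, hj]
    · simp
  have hout : ∀ q : ZMod N, (∑ c, if pathStart w (c, l, q) = some u then (1 : ZMod 2) else 0) =
      if q = u + ((w.val % 2 ^ l.val : ℕ) : ZMod N) then 1 else 0 := fun q => by
    rw [sum_eq_single (w.val.testBit l.val)]
    · simp [pathStart, sub_eq_iff_eq_add]
    · intro c _ hc
      simp [pathStart, hc]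
    · simp
  have hin : (∑ c, if pathStart w (c, (step c).symm (l, p)) = some u then (1 : ZMod 2) else 0) =
      if p = u + ((w.val % 2 ^ ((l - 1).val + 1) : ℕ) : ZMod N) then 1 else 0 := by
    rw [sum_eq_single (w.val.testBit (l - 1).val)]
    · have hb : ((w.val % 2 ^ ((l - 1).val + 1) : ℕ) : ZMod N) =
          ((w.val % 2 ^ (l - 1).val : ℕ) : ZMod N) +
            if w.val.testBit (l - 1).val then 2 ^ (l - 1).val else 0 := by
        rw [Nat.mod_pow_succ, Nat.testBit_eq_decide_div_mod_eq]
        rcases Nat.mod_two_eq_zero_or_one (w.val / 2 ^ (l - 1).val) with h0 | h0 <;> simp [h0]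
      rw [hb]
      simp only [pathStart, step, Equiv.coe_fn_symm_mk, if_true, Option.some.injEq,
        sub_eq_iff_eq_add, add_assoc]
    · intro c _ hc
      simp [pathStart, step, hc]
    · simp
  rw [h1, sum_add_distrib, hin, hout p]
  by_cases hl : l = 0
  · subst hl
    have e1 : ((0 : ZMod d) - 1).val + 1 = d := by
      have hd := NeZero.pos d
      have e : (0 : ZMod d) - 1 = ((d - 1 : ℕ) : ZMod d) := by
        rw [Nat.cast_sub hd]; simp
      rw [e, ZMod.val_cast_of_lt (by omega)]
      omega
    have e2 : w.val % 2 ^ d = w.val := Nat.mod_eq_of_lt ((ZMod.val_lt w).trans_le h)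
    rw [e1, e2]
    simp [port, add_comm, Nat.mod_one]
  · have e1 : (l - 1).val + 1 = l.val := by
      have hl0 : 1 ≤ l.val := Nat.one_le_iff_ne_zero.2 (by rwa [ne_eq, ZMod.val_eq_zero])
      have e : l - 1 = ((l.val - 1 : ℕ) : ZMod d) := by
        rw [Nat.cast_sub hl0]; simp
      have := ZMod.val_lt l
      rw [e, ZMod.val_cast_of_lt (by omega)]
      omega
    rw [e1]
    simp [port, hl, CharTwo.add_self_eq_zero]

end Network

section Context

variable {d N : ℕ}

/-- The parity constraints violated by an edge labelling, for given node charges. -/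
def violation (s : Edge d N → ZMod 4) (χ : Node d N → ZMod 2) (u : Node d N) : ZMod 2 :=
  boundary (fun e => gadget (s e)) u + χ u

/-- The number of violated parity constraints beyond the first. -/
def cost [NeZero d] [NeZero N] (x y : Edge d N → ZMod 4) (χ : Node d N → ZMod 2) : ℝ :=
  (#{u | violation (fun e => x e + y e) χ u ≠ 0} : ℝ) - 1

/-- The hidden bit on a link of the copy with displacement `w`. -/
def linkBit (w : ZMod N) (c : ZMod N → Bool) (e : Link d N) : Bool := (pathStart w e).elim false c

/-- The hidden bits on all edges. -/
def hiddenBits (v : ZMod 5 → ZMod N) (c : ZMod 5 → ZMod N → Bool) (e : Edge d N) : Bool :=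
  linkBit (v (e.1 + 1) - v e.1) (c e.1) e.2

/-- Application of bits to an edge labelling. -/
def mask (A : Edge d N → Bool) (x s : Edge d N → ZMod 4) (e : Edge d N) : ZMod 4 :=
  x e + if A e then incr (s e) else 0

/-- The bits `a` restricted to `σ` with the bits `q` at the ports `v`. -/
def pinAll (v : ZMod 5 → ZMod N) (σ a : ZMod 5 → ZMod N → Bool) (q : ZMod 5 → Bool) (i : ZMod 5) :
    ZMod N → Bool :=
  pin (σ i) (a i) (v i) (q i)

/-- The first player's labelling. -/
def firstLabel (v : ZMod 5 → ZMod N) (σ a : ZMod 5 → ZMod N → Bool) (q : ZMod 5 → Bool)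
    (z : Edge d N → ZMod 4 × ZMod 4) : Edge d N → ZMod 4 :=
  mask (hiddenBits v (pinAll v σ a q)) (fun e => (z e).1) (fun e => (z e).2)

/-- The second player's labelling. -/
def secondLabel (v : ZMod 5 → ZMod N) (σ b : ZMod 5 → ZMod N → Bool) (q : ZMod 5 → Bool)
    (z : Edge d N → ZMod 4 × ZMod 4) : Edge d N → ZMod 4 :=
  mask (hiddenBits v (pinAll v (fun i u => !σ i u) b q)) (fun e => (z e).2 - (z e).1)
    (fun e => (z e).2)

/-- The second player's node charges. -/
def charge (v : ZMod 5 → ZMod N) (z : Edge d N → ZMod 4 × ZMod 4) (u : Node d N) : ZMod 2 :=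
  boundary (fun e => gadget (z e).2) u + ∑ i, port (v i) u

theorem boundary_sum_ite (p : ZMod 5 → Bool) (z : ZMod 5 → Edge d N → ZMod 2) (u : Node d N) :
    boundary (fun e => ∑ i, if p i then z i e else 0) u =
      ∑ i, if p i then boundary (z i) u else 0 := by
  unfold boundary
  rw [sum_comm]
  refine sum_congr rfl fun i _ => ?_
  split_ifs <;> simp

theorem hiddenBits_and (v : ZMod 5 → ZMod N) (σ a b : ZMod 5 → ZMod N → Bool)
    (q q' : ZMod 5 → Bool) (e : Edge d N) :
    (if hiddenBits v (pinAll v σ a q) e && hiddenBits v (pinAll v (fun i u => !σ i u) b q') e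
      then (1 : ZMod 2) else 0) =
    ∑ i, if q i && q' i then pathChain i (v (i + 1) - v i) (v i) e else 0 := by
  rw [sum_eq_single e.1]
  · unfold hiddenBits linkBit pathChain
    cases h : pathStart (v (e.1 + 1) - v e.1) e.2 with
    | none => simp
    | some u =>
      by_cases hu : u = v e.1
      · simp [pinAll, pin, hu]
      · simp [pinAll, pin, hu]
        intros
        simp_all
  · intro i _ hi
    simp [pathChain, hi.symm]
  · simp

variable [NeZero d] [NeZero N]

theorem violation_labels (h : N ≤ 2 ^ d) (v : ZMod 5 → ZMod N) (σ a b : ZMod 5 → ZMod N → Bool)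
    (q q' : ZMod 5 → Bool) (z : Edge d N → ZMod 4 × ZMod 4) (u : Node d N) :
    violation (fun e => firstLabel v σ a q z e + secondLabel v σ b q' z e) (charge v z) u =
      ∑ i, (if q i && q' i then port (v i) u + port (v (i + 1)) u else 0) + ∑ i, port (v i) u := by
  have h1 : ∀ e, gadget (firstLabel v σ a q z e + secondLabel v σ b q' z e) =
      gadget (z e).2 + ∑ i, if q i && q' i then pathChain i (v (i + 1) - v i) (v i) e else 0 := by
    intro e
    rw [← hiddenBits_and v σ a b, ← gadget_incr]
    congr 1
    simp only [firstLabel, secondLabel, mask]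
    ring
  simp only [violation, h1, charge]
  rw [boundary_add, boundary_sum_ite]
  simp only [boundary_pathChain h, add_sub_cancel]
  rw [add_add_add_comm, CharTwo.add_self_eq_zero, zero_add]

theorem sum_charge (v : ZMod 5 → ZMod N) (z : Edge d N → ZMod 4 × ZMod 4) :
    ∑ u, charge v z u = 1 := by
  simp only [charge]
  rw [sum_add_distrib, sum_boundary, sum_comm]
  simp only [sum_port]
  decide

/-- The pattern that is `false` exactly at `i`. -/
def allBut (i j : ZMod 5) : Bool := decide (j ≠ i)

theorem violation_true_true (h : N ≤ 2 ^ d) (v : ZMod 5 → ZMod N)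
    (σ a b : ZMod 5 → ZMod N → Bool) (z : Edge d N → ZMod 4 × ZMod 4) (u : Node d N) :
    violation (fun e => firstLabel v σ a (fun _ => true) z e +
      secondLabel v σ b (fun _ => true) z e) (charge v z) u = ∑ i, port (v i) u := by
  rw [violation_labels h]
  have key : ∀ δ : ZMod 5 → ZMod 2,
      ∑ j, (if true && true then δ j + δ (j + 1) else 0) + ∑ j, δ j = ∑ j, δ j := by decide
  exact key fun i => port (v i) u

theorem violation_allBut_self (h : N ≤ 2 ^ d) (v : ZMod 5 → ZMod N)
    (σ a b : ZMod 5 → ZMod N → Bool) (z : Edge d N → ZMod 4 × ZMod 4) (u : Node d N) (i : ZMod 5) :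
    violation (fun e => firstLabel v σ a (allBut i) z e +
      secondLabel v σ b (allBut i) z e) (charge v z) u =
      port (v (i + 2)) u + port (v (i + 3)) u + port (v (i + 4)) u := by
  rw [violation_labels h]
  have key : ∀ (δ : ZMod 5 → ZMod 2) (i : ZMod 5),
      ∑ j, (if allBut i j && allBut i j then δ j + δ (j + 1) else 0) + ∑ j, δ j =
        δ (i + 2) + δ (i + 3) + δ (i + 4) := by decide
  exact key (fun i => port (v i) u) i

theorem violation_allBut_add_two (h : N ≤ 2 ^ d) (v : ZMod 5 → ZMod N)
    (σ a b : ZMod 5 → ZMod N → Bool) (z : Edge d N → ZMod 4 × ZMod 4) (u : Node d N) (i : ZMod 5) :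
    violation (fun e => firstLabel v σ a (allBut i) z e +
      secondLabel v σ b (allBut (i + 2)) z e) (charge v z) u = port (v (i + 4)) u := by
  rw [violation_labels h]
  have key : ∀ (δ : ZMod 5 → ZMod 2) (i : ZMod 5),
      ∑ j, (if allBut i j && allBut (i + 2) j then δ j + δ (j + 1) else 0) + ∑ j, δ j =
        δ (i + 4) := by decide
  exact key (fun i => port (v i) u) i

theorem cost_nonneg (x y : Edge d N → ZMod 4) {χ : Node d N → ZMod 2} (hχ : ∑ u, χ u = 1) :
    0 ≤ cost x y χ := by
  have h : ∑ u, violation (fun e => x e + y e) χ u = 1 := by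
    simp only [violation]
    rw [sum_add_distrib, sum_boundary, hχ, zero_add]
  obtain ⟨u, -, hu⟩ := exists_ne_zero_of_sum_ne_zero (h.trans_ne one_ne_zero)
  have : 1 ≤ #{u | violation (fun e => x e + y e) χ u ≠ 0} :=
    card_pos.2 ⟨u, by simpa using hu⟩
  rw [cost, sub_nonneg]
  exact_mod_cast this

theorem cost_le_card (x y : Edge d N → ZMod 4) (χ : Node d N → ZMod 2) :
    cost x y χ ≤ (d * N : ℕ) := by
  have : #{u | violation (fun e => x e + y e) χ u ≠ 0} ≤ d * N := by
    refine (card_le_univ _).trans ?_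
    simp [ZMod.card]
  have : (#{u | violation (fun e => x e + y e) χ u ≠ 0} : ℝ) ≤ (d * N : ℕ) := by exact_mod_cast this
  rw [cost]
  linarith

theorem cost_true_true_le (h : N ≤ 2 ^ d) (v : ZMod 5 → ZMod N)
    (σ a b : ZMod 5 → ZMod N → Bool) (z : Edge d N → ZMod 4 × ZMod 4) :
    cost (firstLabel v σ a (fun _ => true) z) (secondLabel v σ b (fun _ => true) z)
      (charge v z) ≤ 4 := by
  have h1 : #{u | violation (fun e => firstLabel v σ a (fun _ => true) z e +
      secondLabel v σ b (fun _ => true) z e) (charge v z) u ≠ 0} ≤ 5 := by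
    calc _ ≤ #(univ.image fun i => ((0 : ZMod d), v i)) := by
          refine card_le_card fun u hu => ?_
          rw [mem_filter, violation_true_true h] at hu
          obtain ⟨i, -, hi⟩ := exists_ne_zero_of_sum_ne_zero hu.2
          rw [mem_image]
          refine ⟨i, mem_univ _, ?_⟩
          by_contra hne
          exact hi (if_neg fun e => hne e.symm)
      _ ≤ 5 := card_image_le
  have h2 : (#{u | violation (fun e => firstLabel v σ a (fun _ => true) z e +
      secondLabel v σ b (fun _ => true) z e) (charge v z) u ≠ 0} : ℝ) ≤ 5 := by exact_mod_cast h1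
  rw [cost]
  linarith

theorem cost_allBut_add_two (h : N ≤ 2 ^ d) (v : ZMod 5 → ZMod N)
    (σ a b : ZMod 5 → ZMod N → Bool) (z : Edge d N → ZMod 4 × ZMod 4) (i : ZMod 5) :
    cost (firstLabel v σ a (allBut i) z) (secondLabel v σ b (allBut (i + 2)) z)
      (charge v z) = 0 := by
  simp only [cost, violation_allBut_add_two h]
  simp [port, Finset.filter_eq']

theorem le_cost_allBut_self (h : N ≤ 2 ^ d) (v : ZMod 5 → ZMod N)
    (σ a b : ZMod 5 → ZMod N → Bool) (z : Edge d N → ZMod 4 × ZMod 4) (i : ZMod 5) :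
    2 - 2 * ((if v (i + 2) = v (i + 3) then 1 else 0) + (if v (i + 2) = v (i + 4) then 1 else 0) +
        (if v (i + 3) = v (i + 4) then 1 else 0)) ≤
      cost (firstLabel v σ a (allBut i) z) (secondLabel v σ b (allBut i) z) (charge v z) := by
  have h0 := cost_nonneg (firstLabel v σ a (allBut i) z) (secondLabel v σ b (allBut i) z)
    (sum_charge v z)
  by_cases h1 : v (i + 2) = v (i + 3)
  · rw [if_pos h1]
    refine le_trans ?_ h0
    split_ifs <;> norm_num
  by_cases h2 : v (i + 2) = v (i + 4)
  · rw [if_pos h2]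
    refine le_trans ?_ h0
    split_ifs <;> norm_num
  by_cases h3 : v (i + 3) = v (i + 4)
  · rw [if_pos h3]
    refine le_trans ?_ h0
    split_ifs
    norm_num
  have h4 : ({(0, v (i + 2)), (0, v (i + 3)), (0, v (i + 4))} : Finset (Node d N)) ⊆
      ({u | violation (fun e => firstLabel v σ a (allBut i) z e +
        secondLabel v σ b (allBut i) z e) (charge v z) u ≠ 0} : Finset (Node d N)) := by
    intro u hu
    rw [mem_filter, violation_allBut_self h]
    refine ⟨mem_univ _, ?_⟩
    simp only [mem_insert, mem_singleton] at hu
    have h1' := Ne.symm h1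
    have h2' := Ne.symm h2
    have h3' := Ne.symm h3
    rcases hu with rfl | rfl | rfl <;> simp [port, *]
  have h5 := card_le_card h4
  rw [card_eq_three.2 ⟨_, _, _, by simpa using h1, by simpa using h2, by simpa using h3, rfl⟩] at h5
  have h6 : (3 : ℝ) ≤ (#{u | violation (fun e => firstLabel v σ a (allBut i) z e +
        secondLabel v σ b (allBut i) z e) (charge v z) u ≠ 0} : ℝ) := by exact_mod_cast h5
  rw [cost, if_neg h1, if_neg h2, if_neg h3]
  linarith

end Context

section Transfer

theorem expect_gap_le {κ κ' : Type*} [Fintype κ] [Fintype κ'] [Nonempty κ] [Nonempty κ'] (θ : ℝ)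
    {A₀ : κ → ℝ} (A₁ : κ → ℝ) {B₀ : κ' → ℝ} (B₁ : κ' → ℝ) (hA : ∀ a, 0 ≤ A₀ a)
    (hB : ∀ b, 0 ≤ B₀ b) :
    𝔼 a, 𝔼 b, gap θ (A₀ a) (A₁ a) (B₀ b) (B₁ b) ≤
      gap θ (𝔼 a, A₀ a) (𝔼 a, A₁ a) (𝔼 b, B₀ b) (𝔼 b, B₁ b) := by
  have hmax : ∀ {κ : Type _} [Fintype κ] [Nonempty κ] (P Q : κ → ℝ),
      max (𝔼 a, P a - 𝔼 a, Q a) 0 ≤ 𝔼 a, max (P a - Q a) 0 := by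
    intro κ _ _ P Q
    refine max_le ?_ (expect_nonneg_of_nonneg fun a => le_max_right _ _)
    rw [← expect_sub_distrib]
    exact Finset.expect_le_expect fun a _ => le_max_left _ _
  have h1 := mul_le_mul_of_nonneg_right (hmax A₀ A₁) (expect_nonneg_of_nonneg hB)
  have h2 : (𝔼 a, A₀ a) * max (𝔼 b, B₀ b - 𝔼 b, B₁ b) 0 ≤
      (𝔼 a, A₀ a) * 𝔼 b, max (B₀ b - B₁ b) 0 := by
    refine mul_le_mul_of_nonneg_left ?_ (expect_nonneg_of_nonneg hA)
    refine max_le ?_ (expect_nonneg_of_nonneg fun a => le_max_right _ _)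
    rw [← expect_sub_distrib]
    exact Finset.expect_le_expect fun a _ => le_max_left _ _
  have h3 : 𝔼 a, 𝔼 b, gap θ (A₀ a) (A₁ a) (B₀ b) (B₁ b) =
      1 / 10 * ((𝔼 a, A₀ a) * (𝔼 b, B₀ b)) + 5 * θ - (𝔼 a, max (A₀ a - A₁ a) 0) * (𝔼 b, B₀ b) -
        (𝔼 a, A₀ a) * 𝔼 b, max (B₀ b - B₁ b) 0 := by
    simp only [gap, expect_sub_distrib, expect_add_distrib, ← mul_expect, ← expect_mul,
      Fintype.expect_const]
  rw [h3, gap]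
  linarith

variable {d N : ℕ}

/-- The bits `c` on the copy `i` of the network, with displacement `w`. -/
def ownBits (i : ZMod 5) (w : ZMod N) (c : ZMod N → Bool) (e : Edge d N) : Bool :=
  decide (e.1 = i) && linkBit w c e.2

/-- The bits of `A` outside of the copy `i` of the network. -/
def otherBits (i : ZMod 5) (A : Edge d N → Bool) (e : Edge d N) : Bool := decide (e.1 ≠ i) && A e

theorem mask_hiddenBits_update (i : ZMod 5) (v : ZMod 5 → ZMod N) (σ a : ZMod 5 → ZMod N → Bool)
    (c : ZMod N → Bool) {q : ZMod 5 → Bool} (hq : ∀ j, j ≠ i → q j = true) (e : Edge d N) :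
    hiddenBits v (pinAll v σ (Function.update a i c) q) e =
      if e.1 = i then ownBits i (v (i + 1) - v i) (pin (σ i) c (v i) (q i)) e
      else otherBits i (hiddenBits v (pinAll v σ a (allBut i))) e := by
  by_cases he : e.1 = i
  · simp [he, hiddenBits, ownBits, pinAll]
  · simp [he, hiddenBits, otherBits, pinAll, hq, allBut]

/-- The substitution absorbing the bits outside of the copy `i` into the labels. -/
def absorb (A B : Edge d N → Bool) (z : Edge d N → ZMod 4 × ZMod 4) (e : Edge d N) :
    ZMod 4 × ZMod 4 :=
  ((z e).1 + (if A e then incr (z e).2 else 0),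
    (z e).2 + (if A e then incr (z e).2 else 0) + (if B e then incr (z e).2 else 0))

theorem absorb_injective (A B : Edge d N → Bool) : Function.Injective (absorb A B) :=
  fun _ _ h => funext fun e => masked_pair_injective (A e) (B e) (congrFun h e)

/-- The charges remaining after the substitution. -/
def ownCharge (i : ZMod 5) (v : ZMod 5 → ZMod N) (z : Edge d N → ZMod 4 × ZMod 4) (u : Node d N) :
    ZMod 2 :=
  boundary (fun e => gadget (z e).2) u + (port (v (i + 2)) u + port (v (i + 3)) u +
    port (v (i + 4)) u)

section Absorb

variable (i : ZMod 5) (v : ZMod 5 → ZMod N) (σ a b : ZMod 5 → ZMod N → Bool)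
  (z : Edge d N → ZMod 4 × ZMod 4)

/-- The substitution for given hidden bits. -/
def absorbOthers : Edge d N → ZMod 4 × ZMod 4 :=
  absorb (otherBits i (hiddenBits v (pinAll v σ a (allBut i))))
    (otherBits i (hiddenBits v (pinAll v (fun i u => !σ i u) b (allBut i)))) z

theorem firstLabel_update (c : ZMod N → Bool) {q : ZMod 5 → Bool}
    (hq : ∀ j, j ≠ i → q j = true) :
    firstLabel v σ (Function.update a i c) q z =
      mask (ownBits i (v (i + 1) - v i) (pin (σ i) c (v i) (q i)))
        (fun e => (absorbOthers i v σ a b z e).1) (fun e => (absorbOthers i v σ a b z e).2) := by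
  ext e
  simp only [firstLabel, mask, mask_hiddenBits_update i v σ a c hq]
  by_cases he : e.1 = i
  · simp [absorbOthers, absorb, he, otherBits]
  · simp [absorbOthers, absorb, he, ownBits]

theorem secondLabel_update (c : ZMod N → Bool) {q : ZMod 5 → Bool}
    (hq : ∀ j, j ≠ i → q j = true) :
    secondLabel v σ (Function.update b i c) q z =
      mask (ownBits i (v (i + 1) - v i) (pin (fun u => !σ i u) c (v i) (q i)))
        (fun e => (absorbOthers i v σ a b z e).2 - (absorbOthers i v σ a b z e).1)
        (fun e => (absorbOthers i v σ a b z e).2) := by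
  ext e
  simp only [secondLabel, mask, mask_hiddenBits_update i v _ b c hq]
  by_cases he : e.1 = i
  · simp [absorbOthers, absorb, he, otherBits]
  · simp [absorbOthers, absorb, he, ownBits]
    ring

theorem charge_eq_ownCharge [NeZero d] [NeZero N] (h : N ≤ 2 ^ d) :
    charge v z = ownCharge i v (absorbOthers i v σ a b z) := by
  have h1 : ∀ e, gadget (absorbOthers i v σ a b z e).2 = gadget (z e).2 +
      ∑ j, if allBut i j && allBut i j then pathChain j (v (j + 1) - v j) (v j) e else 0 := by
    intro e
    simp only [absorbOthers, absorb]
    rw [gadget_incr, ← hiddenBits_and v σ a b]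
    congr 1
    by_cases he : e.1 = i
    · rw [hiddenBits_and]
      simp only [otherBits, he]
      symm
      simp only [ne_eq, not_true_eq_false, decide_false, Bool.false_and, Bool.false_eq_true,
        if_false]
      refine sum_eq_zero fun j _ => ?_
      by_cases hj : j = i
      · simp [allBut, hj]
      · have : i ≠ j := Ne.symm hj
        simp [pathChain, he, this]
    · simp [otherBits, he]
  have key : ∀ (δ : ZMod 5 → ZMod 2) (i : ZMod 5), ∑ j, δ j =
      ∑ j, (if allBut i j && allBut i j then δ j + δ (j + 1) else 0) +
        (δ (i + 2) + δ (i + 3) + δ (i + 4)) := by decide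
  ext u
  simp only [charge, ownCharge, h1]
  rw [boundary_add, boundary_sum_ite]
  simp only [boundary_pathChain h, add_sub_cancel]
  rw [key (fun j => port (v j) u) i, ← add_assoc]

end Absorb

variable [NeZero N]

/-- The first player's average weight in a context. -/
def firstMean (f : (Edge d N → ZMod 4) → ℝ) (v : ZMod 5 → ZMod N) (σ : ZMod 5 → ZMod N → Bool)
    (z : Edge d N → ZMod 4 × ZMod 4) (q : ZMod 5 → Bool) : ℝ :=
  𝔼 a : ZMod 5 → ZMod N → Bool, f (firstLabel v σ a q z)

/-- The second player's average weight in a context. -/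
def secondMean (g : (Edge d N → ZMod 4) → (Node d N → ZMod 2) → ℝ) (v : ZMod 5 → ZMod N)
    (σ : ZMod 5 → ZMod N → Bool) (z : Edge d N → ZMod 4 × ZMod 4) (q : ZMod 5 → Bool) : ℝ :=
  𝔼 b : ZMod 5 → ZMod N → Bool, g (secondLabel v σ b q z) (charge v z)

/-- The weight `f` as a function of the hidden bits of the copy `i`. -/
def firstOwn (f : (Edge d N → ZMod 4) → ℝ) (i : ZMod 5) (w : ZMod N)
    (z : Edge d N → ZMod 4 × ZMod 4) (c : ZMod N → Bool) : ℝ :=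
  f (mask (ownBits i w c) (fun e => (z e).1) (fun e => (z e).2))

/-- The weight `g` as a function of the hidden bits of the copy `i`. -/
def secondOwn (g : (Edge d N → ZMod 4) → (Node d N → ZMod 2) → ℝ) (i : ZMod 5) (w : ZMod N)
    (z : Edge d N → ZMod 4 × ZMod 4) (χ : Node d N → ZMod 2) (c : ZMod N → Bool) : ℝ :=
  g (mask (ownBits i w c) (fun e => (z e).2 - (z e).1) (fun e => (z e).2)) χ

/-- The gap of the copy `i` with the other copies absorbed. -/
def ownGap (θ : ℝ) (f : (Edge d N → ZMod 4) → ℝ)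
    (g : (Edge d N → ZMod 4) → (Node d N → ZMod 2) → ℝ) (i : ZMod 5) (w j : ZMod N)
    (z : Edge d N → ZMod 4 × ZMod 4) (χ : Node d N → ZMod 2) (τ : ZMod N → Bool) : ℝ :=
  gap θ (pinnedMean (firstOwn f i w z) τ j false) (pinnedMean (firstOwn f i w z) τ j true)
    (pinnedMean (secondOwn g i w z χ) (fun u => !τ u) j false)
    (pinnedMean (secondOwn g i w z χ) (fun u => !τ u) j true)

theorem expect_ownGap_nonneg {f : (Edge d N → ZMod 4) → ℝ}
    {g : (Edge d N → ZMod 4) → (Node d N → ZMod 2) → ℝ} (hf0 : ∀ x, 0 ≤ f x) (hf1 : ∀ x, f x ≤ 1)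
    (hg0 : ∀ y χ, 0 ≤ g y χ) (hg1 : ∀ y χ, g y χ ≤ 1) (i : ZMod 5)
    (z : Edge d N → ZMod 4 × ZMod 4) :
    0 ≤ 𝔼 v : ZMod 5 → ZMod N, 𝔼 τ : ZMod N → Bool,
      ownGap (smallError N) f g i (v (i + 1) - v i) (v i) z (ownCharge i v z) τ := by
  let e : ZMod N → ZMod 5 → ZMod N := fun j k => if k = i ∨ k = i + 1 then j else 0
  set φ : (ZMod 5 → ZMod N) → ℝ := fun v => 𝔼 τ : ZMod N → Bool,
    ownGap (smallError N) f g i (v (i + 1) - v i) (v i) z (ownCharge i v z) τ with hφ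
  have h1 : 𝔼 v, φ v = 𝔼 v, 𝔼 j, φ (v + e j) := by
    rw [expect_comm univ univ fun v j => φ (v + e j)]
    have hj : ∀ j, 𝔼 v, φ (v + e j) = 𝔼 v, φ v := fun j =>
      Fintype.expect_equiv (Equiv.addRight (e j)) _ _ fun v => rfl
    simp only [hj, Fintype.expect_const]
  rw [h1]
  refine expect_nonneg_of_nonneg fun v => ?_
  have hne : ∀ i : ZMod 5, (i + 2 ≠ i ∧ i + 2 ≠ i + 1) ∧ (i + 3 ≠ i ∧ i + 3 ≠ i + 1) ∧
      (i + 4 ≠ i ∧ i + 4 ≠ i + 1) := by decide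
  have h2 : ∀ j, φ (v + e j) = 𝔼 τ : ZMod N → Bool,
      ownGap (smallError N) f g i (v (i + 1) - v i) (v i + j) z (ownCharge i v z) τ := by
    intro j
    have e2 : ownCharge i (v + e j) z = ownCharge i v z := by
      ext u
      simp [ownCharge, e, hne i]
    simp only [hφ, e2]
    simp [e]
  simp only [h2]
  have h3 : 𝔼 j, 𝔼 τ : ZMod N → Bool,
      ownGap (smallError N) f g i (v (i + 1) - v i) (v i + j) z (ownCharge i v z) τ =
      𝔼 j, 𝔼 τ : ZMod N → Bool,
      ownGap (smallError N) f g i (v (i + 1) - v i) j z (ownCharge i v z) τ :=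
    Fintype.expect_equiv (Equiv.addLeft (v i)) _ _ fun j => rfl
  rw [h3, expect_comm]
  have h4 := expect_gap_nonneg (f := firstOwn f i (v (i + 1) - v i) z)
    (g := secondOwn g i (v (i + 1) - v i) z (ownCharge i v z))
    (fun _ => hf0 _) (fun _ => hf1 _) (fun _ => hg0 _ _) (fun _ => hg1 _ _)
  rw [ZMod.card] at h4
  exact h4

variable [NeZero d]

theorem expect_eval {κ : Type*} [Fintype κ] [Nonempty κ] (i : ZMod 5) (φ : κ → ℝ) :
    𝔼 σ : ZMod 5 → κ, φ (σ i) = 𝔼 τ, φ τ :=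
  (expect_expect_update i fun σ : ZMod 5 → κ => φ (σ i)).symm.trans (by simp)

/-- On average over all contexts, pinning the hidden bit of the copy `i` rarely matters. -/
theorem expect_gap_context_nonneg (h : N ≤ 2 ^ d) {f : (Edge d N → ZMod 4) → ℝ}
    {g : (Edge d N → ZMod 4) → (Node d N → ZMod 2) → ℝ} (hf0 : ∀ x, 0 ≤ f x) (hf1 : ∀ x, f x ≤ 1)
    (hg0 : ∀ y χ, 0 ≤ g y χ) (hg1 : ∀ y χ, g y χ ≤ 1) (i : ZMod 5) :
    0 ≤ 𝔼 v : ZMod 5 → ZMod N, 𝔼 σ : ZMod 5 → ZMod N → Bool, 𝔼 z : Edge d N → ZMod 4 × ZMod 4,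
      gap (smallError N) (firstMean f v σ z (allBut i)) (firstMean f v σ z fun _ => true)
        (secondMean g v σ z (allBut i)) (secondMean g v σ z fun _ => true) := by
  have hi : ∀ j, j ≠ i → allBut i j = true := fun j hj => by simp [allBut, hj]
  have hii : allBut i i = false := by simp [allBut]
  have h1 : ∀ v σ z, 𝔼 a : ZMod 5 → ZMod N → Bool, 𝔼 b : ZMod 5 → ZMod N → Bool,
      ownGap (smallError N) f g i (v (i + 1) - v i) (v i) (absorbOthers i v σ a b z)
        (ownCharge i v (absorbOthers i v σ a b z)) (σ i) ≤
      gap (smallError N) (firstMean f v σ z (allBut i)) (firstMean f v σ z fun _ => true)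
        (secondMean g v σ z (allBut i)) (secondMean g v σ z fun _ => true) := by
    intro v σ z
    simp only [firstMean, secondMean]
    rw [← expect_expect_update i fun a => f (firstLabel v σ a (allBut i) z),
      ← expect_expect_update i fun a => f (firstLabel v σ a (fun _ => true) z),
      ← expect_expect_update i fun b => g (secondLabel v σ b (allBut i) z) (charge v z),
      ← expect_expect_update i fun b => g (secondLabel v σ b (fun _ => true) z) (charge v z)]
    refine le_trans (le_of_eq ?_) (expect_gap_le _ _ _
      (fun a => expect_nonneg_of_nonneg fun c => hf0 _)
      (fun b => expect_nonneg_of_nonneg fun c => hg0 _ _))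
    refine Finset.expect_congr rfl fun a _ => Finset.expect_congr rfl fun b _ => ?_
    rw [charge_eq_ownCharge i v σ a b z h]
    simp only [firstLabel_update i v σ a b z _ hi, secondLabel_update i v σ a b z _ hi, hii,
      firstLabel_update i v σ a b z _ (q := fun _ => true) (fun _ _ => rfl),
      secondLabel_update i v σ a b z _ (q := fun _ => true) (fun _ _ => rfl)]
    rfl
  have h2 : ∀ v σ, 𝔼 z : Edge d N → ZMod 4 × ZMod 4,
      ownGap (smallError N) f g i (v (i + 1) - v i) (v i) z (ownCharge i v z) (σ i) ≤
      𝔼 z : Edge d N → ZMod 4 × ZMod 4,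
        gap (smallError N) (firstMean f v σ z (allBut i)) (firstMean f v σ z fun _ => true)
          (secondMean g v σ z (allBut i)) (secondMean g v σ z fun _ => true) := by
    intro v σ
    refine le_trans (le_of_eq ?_) (Finset.expect_le_expect fun z _ => h1 v σ z)
    rw [expect_comm]
    have : ∀ a b : ZMod 5 → ZMod N → Bool, 𝔼 z : Edge d N → ZMod 4 × ZMod 4,
        ownGap (smallError N) f g i (v (i + 1) - v i) (v i) (absorbOthers i v σ a b z)
          (ownCharge i v (absorbOthers i v σ a b z)) (σ i) =
        𝔼 z : Edge d N → ZMod 4 × ZMod 4,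
          ownGap (smallError N) f g i (v (i + 1) - v i) (v i) z (ownCharge i v z) (σ i) :=
      fun a b => Fintype.expect_equiv (Equiv.ofBijective _
        (Finite.injective_iff_bijective.1 (absorb_injective _ _))) _ _ fun z => rfl
    have h3 : ∀ a : ZMod 5 → ZMod N → Bool, 𝔼 z : Edge d N → ZMod 4 × ZMod 4,
        𝔼 b : ZMod 5 → ZMod N → Bool,
        ownGap (smallError N) f g i (v (i + 1) - v i) (v i) (absorbOthers i v σ a b z)
          (ownCharge i v (absorbOthers i v σ a b z)) (σ i) =
        𝔼 z : Edge d N → ZMod 4 × ZMod 4,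
          ownGap (smallError N) f g i (v (i + 1) - v i) (v i) z (ownCharge i v z) (σ i) :=
      fun a => by
        rw [expect_comm]
        simp only [this a, Fintype.expect_const]
    simp only [h3, Fintype.expect_const]
  refine le_trans ?_ (Finset.expect_le_expect fun v _ => Finset.expect_le_expect fun σ _ => h2 v σ)
  have h4 : ∀ v : ZMod 5 → ZMod N, 𝔼 σ : ZMod 5 → ZMod N → Bool,
      𝔼 z : Edge d N → ZMod 4 × ZMod 4,
        ownGap (smallError N) f g i (v (i + 1) - v i) (v i) z (ownCharge i v z) (σ i) =
      𝔼 z : Edge d N → ZMod 4 × ZMod 4, 𝔼 τ : ZMod N → Bool,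
        ownGap (smallError N) f g i (v (i + 1) - v i) (v i) z (ownCharge i v z) τ := fun v => by
    rw [expect_comm]
    refine Finset.expect_congr rfl fun z _ => ?_
    exact expect_eval i fun τ =>
      ownGap (smallError N) f g i (v (i + 1) - v i) (v i) z (ownCharge i v z) τ
  simp only [h4]
  rw [expect_comm]
  exact expect_nonneg_of_nonneg fun z => expect_ownGap_nonneg hf0 hf1 hg0 hg1 i z

end Transfer

section Counting

theorem sum_mul_le_of_five_cycle {A₀ B₀ : ZMod 5 → ℝ} {A₁ B₁ : ℝ} (hA : ∀ i, 0 ≤ A₀ i)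
    (hB : ∀ i, 0 ≤ B₀ i) (hA₁ : 0 ≤ A₁) (hB₁ : 0 ≤ B₁) (h : ∀ i, A₀ i * B₀ (i + 2) = 0) :
    ∑ i, A₀ i * B₀ i ≤ 2 * (A₁ * B₁) +
      ∑ i, (max (A₀ i - A₁) 0 * B₀ i + A₀ i * max (B₀ i - B₁) 0) := by
  classical
  let p : ZMod 5 → Bool := fun i => decide (A₀ i * B₀ i ≠ 0)
  have hp : ∀ i, ¬ (p i = true ∧ p (i + 2) = true) := by
    rintro i ⟨h1, h2⟩
    simp only [p, decide_eq_true_eq, mul_ne_zero_iff] at h1 h2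
    exact mul_ne_zero h1.1 h2.2 (h i)
  have hcard : ∀ p : ZMod 5 → Bool, (∀ i, ¬ (p i = true ∧ p (i + 2) = true)) →
      #{i | p i = true} ≤ 2 := by decide
  have hterm : ∀ i, A₀ i * B₀ i ≤ (if p i = true then A₁ * B₁ else 0) +
      (max (A₀ i - A₁) 0 * B₀ i + A₀ i * max (B₀ i - B₁) 0) := by
    intro i
    have h1 := mul_le_mul_of_nonneg_right (le_max_left (A₀ i - A₁) 0) (hB i)
    have h2 := mul_le_mul_of_nonneg_left (le_max_left (B₀ i - B₁) 0) (hA i)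
    have h3 := mul_nonneg (le_max_right (A₀ i - A₁) 0) (hB i)
    have h4 := mul_nonneg (hA i) (le_max_right (B₀ i - B₁) 0)
    by_cases hi : p i = true
    · rw [if_pos hi]
      by_cases hBB : B₀ i ≤ B₁
      · have := mul_le_mul_of_nonneg_left hBB hA₁
        nlinarith
      · by_cases hAA : A₀ i ≤ A₁
        · have := mul_le_mul_of_nonneg_right hAA hB₁
          nlinarith
        · push Not at hBB hAA
          nlinarith [mul_nonneg (sub_nonneg.2 hAA.le) (sub_nonneg.2 hBB.le)]
    · have : A₀ i * B₀ i = 0 := by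
        simpa only [p, decide_eq_true_eq, ne_eq, not_not] using hi
      rw [if_neg hi, this]
      linarith
  refine (sum_le_sum fun i _ => hterm i).trans ?_
  rw [sum_add_distrib, ← sum_filter, sum_const, nsmul_eq_mul]
  have h5 : (#{i | p i = true} : ℝ) ≤ 2 := by exact_mod_cast hcard p hp
  have := mul_le_mul_of_nonneg_right h5 (mul_nonneg hA₁ hB₁)
  linarith

variable {d N : ℕ} [NeZero d] [NeZero N]

/-- The average over all contexts. -/
def contextMean (φ : (ZMod 5 → ZMod N) → (ZMod 5 → ZMod N → Bool) →
    (Edge d N → ZMod 4 × ZMod 4) → ℝ) : ℝ :=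
  𝔼 v, 𝔼 σ, 𝔼 z, φ v σ z

theorem contextMean_mono {φ ψ : (ZMod 5 → ZMod N) → (ZMod 5 → ZMod N → Bool) →
    (Edge d N → ZMod 4 × ZMod 4) → ℝ} (h : ∀ v σ z, φ v σ z ≤ ψ v σ z) :
    contextMean φ ≤ contextMean ψ :=
  Finset.expect_le_expect fun _ _ => Finset.expect_le_expect fun _ _ =>
    Finset.expect_le_expect fun _ _ => h _ _ _

theorem contextMean_sum {κ : Type*} [Fintype κ] (φ : κ → (ZMod 5 → ZMod N) →
    (ZMod 5 → ZMod N → Bool) → (Edge d N → ZMod 4 × ZMod 4) → ℝ) :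
    contextMean (fun v σ z => ∑ r, φ r v σ z) = ∑ r, contextMean (φ r) := by
  simp only [contextMean, expect_sum_comm]

/-- The average product of the two players' weights for the given bits. -/
def productMean (f : (Edge d N → ZMod 4) → ℝ) (g : (Edge d N → ZMod 4) → (Node d N → ZMod 2) → ℝ)
    (q : ZMod 5 → Bool) : ℝ :=
  contextMean fun v σ z => firstMean f v σ z q * secondMean g v σ z q

theorem firstMean_mul_secondMean (f : (Edge d N → ZMod 4) → ℝ)
    (g : (Edge d N → ZMod 4) → (Node d N → ZMod 2) → ℝ) (v : ZMod 5 → ZMod N)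
    (σ : ZMod 5 → ZMod N → Bool) (z : Edge d N → ZMod 4 × ZMod 4) (q q' : ZMod 5 → Bool) :
    firstMean f v σ z q * secondMean g v σ z q' = 𝔼 a : ZMod 5 → ZMod N → Bool,
      𝔼 b : ZMod 5 → ZMod N → Bool,
        f (firstLabel v σ a q z) * g (secondLabel v σ b q' z) (charge v z) := by
  simp only [firstMean, secondMean, ← mul_expect, ← expect_mul]

theorem sum_productMean_le (h : N ≤ 2 ^ d) {f : (Edge d N → ZMod 4) → ℝ}
    {g : (Edge d N → ZMod 4) → (Node d N → ZMod 2) → ℝ} (hf0 : ∀ x, 0 ≤ f x) (hf1 : ∀ x, f x ≤ 1)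
    (hg0 : ∀ y χ, 0 ≤ g y χ) (hg1 : ∀ y χ, g y χ ≤ 1)
    (hfg : ∀ x y χ, ∑ u, χ u = 1 → cost x y χ = 0 → f x * g y χ = 0) :
    9 / 10 * ∑ i, productMean f g (allBut i) ≤
      2 * productMean f g (fun _ => true) + 25 * smallError N := by
  have hfM : ∀ v σ z q, 0 ≤ firstMean f v σ z q := fun v σ z q =>
    expect_nonneg_of_nonneg fun _ => hf0 _
  have hgM : ∀ v σ z q, 0 ≤ secondMean g v σ z q := fun v σ z q =>
    expect_nonneg_of_nonneg fun _ => hg0 _ _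
  have h1 : ∀ v σ z, ∑ i, firstMean f v σ z (allBut i) * secondMean g v σ z (allBut i) ≤
      2 * (firstMean f v σ z (fun _ => true) * secondMean g v σ z fun _ => true) +
      (1 / 10 * (∑ i, firstMean f v σ z (allBut i) * secondMean g v σ z (allBut i)) +
        25 * smallError N -
      ∑ i, gap (smallError N) (firstMean f v σ z (allBut i)) (firstMean f v σ z fun _ => true)
        (secondMean g v σ z (allBut i)) (secondMean g v σ z fun _ => true)) := by
    intro v σ z
    refine (sum_mul_le_of_five_cycle (fun i => hfM v σ z (allBut i))
      (fun i => hgM v σ z (allBut i)) (hfM v σ z fun _ => true) (hgM v σ z fun _ => true)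
      fun i => ?_).trans (le_of_eq ?_)
    · rw [firstMean_mul_secondMean]
      refine expect_eq_zero fun a _ => expect_eq_zero fun b _ => ?_
      exact hfg _ _ _ (sum_charge v z) (cost_allBut_add_two h v σ a b z i)
    · simp only [gap, sum_sub_distrib, sum_add_distrib, ← Finset.mul_sum, sum_const, card_univ,
        ZMod.card, nsmul_eq_mul]
      push_cast
      ring
  have h2 := contextMean_mono h1
  have h3 : 0 ≤ ∑ i, contextMean fun v σ z =>
      gap (smallError N) (firstMean f v σ z (allBut i)) (firstMean f v σ z fun _ => true)
        (secondMean g v σ z (allBut i)) (secondMean g v σ z fun _ => true) :=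
    sum_nonneg fun i _ => expect_gap_context_nonneg h hf0 hf1 hg0 hg1 i
  have h4 : contextMean (d := d) (N := N) (fun v σ z =>
      2 * (firstMean f v σ z (fun _ => true) * secondMean g v σ z fun _ => true) +
      (1 / 10 * (∑ i, firstMean f v σ z (allBut i) * secondMean g v σ z (allBut i)) +
        25 * smallError N -
      ∑ i, gap (smallError N) (firstMean f v σ z (allBut i)) (firstMean f v σ z fun _ => true)
        (secondMean g v σ z (allBut i)) (secondMean g v σ z fun _ => true))) =
      2 * productMean f g (fun _ => true) + (1 / 10 * (∑ i, productMean f g (allBut i)) +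
        25 * smallError N - ∑ i, contextMean fun v σ z =>
      gap (smallError N) (firstMean f v σ z (allBut i)) (firstMean f v σ z fun _ => true)
        (secondMean g v σ z (allBut i)) (secondMean g v σ z fun _ => true)) := by
    simp only [productMean, ← contextMean_sum]
    simp only [contextMean, expect_add_distrib, expect_sub_distrib, ← mul_expect,
      Fintype.expect_const]
  rw [h4, contextMean_sum] at h2
  change ∑ i, productMean f g (allBut i) ≤ _ at h2
  linarith

theorem expect_ite_eq_apply {i j : ZMod 5} (hij : i ≠ j) :
    𝔼 v : ZMod 5 → ZMod N, (if v i = v j then (1 : ℝ) else 0) = 1 / N := by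
  rw [← expect_expect_update i]
  have h : ∀ v : ZMod 5 → ZMod N, 𝔼 c : ZMod N,
      (if Function.update v i c i = Function.update v i c j then (1 : ℝ) else 0) = 1 / N := by
    intro v
    simp only [Function.update_self, Function.update_of_ne hij.symm]
    rw [Fintype.expect_eq_sum_div_card]
    simp [ZMod.card]
  simp only [h, Fintype.expect_const]

/-- A lower bound on the number of rank-one terms in a nonnegative factorization of the cost. -/
theorem one_le_card_mul_smallError (h : N ≤ 2 ^ d) (hN : 54 ≤ N) {K : ℕ}
    (f : Fin K → (Edge d N → ZMod 4) → ℝ)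
    (g : Fin K → (Edge d N → ZMod 4) → (Node d N → ZMod 2) → ℝ)
    (hf0 : ∀ r x, 0 ≤ f r x) (hf1 : ∀ r x, f r x ≤ 1)
    (hg0 : ∀ r y χ, 0 ≤ g r y χ) (hg1 : ∀ r y χ, g r y χ ≤ 1)
    (hfg : ∀ x y χ, ∑ u, χ u = 1 → cost x y χ = (d * N : ℕ) * ∑ r, f r x * g r y χ) :
    1 ≤ 50 * (K * smallError N * (d * N : ℕ)) := by
  have hL : (0 : ℝ) < (d * N : ℕ) := by
    exact_mod_cast Nat.mul_pos (NeZero.pos d) (NeZero.pos N)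
  have hprod : ∀ q, (d * N : ℕ) * ∑ r, productMean (f r) (g r) q =
      contextMean (d := d) fun v σ z =>
        𝔼 a : ZMod 5 → ZMod N → Bool, 𝔼 b : ZMod 5 → ZMod N → Bool, cost (firstLabel v σ a q z) (secondLabel v σ b q z) (charge v z) := by
    intro q
    have hc : ∀ (v : ZMod 5 → ZMod N) (z : Edge d N → ZMod 4 × ZMod 4) (x y : Edge d N → ZMod 4),
        cost x y (charge v z) = (d * N : ℕ) * ∑ r, f r x * g r y (charge v z) :=
      fun v z x y => hfg x y _ (sum_charge v z)
    simp only [hc, productMean, firstMean_mul_secondMean]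
    rw [← contextMean_sum]
    simp only [contextMean, expect_sum_comm, ← mul_expect]
  have hzero : ∀ r x y χ, ∑ u, χ u = 1 → cost x y χ = 0 → f r x * g r y χ = 0 := by
    intro r x y χ hχ hc
    rw [hfg x y χ hχ, mul_eq_zero, or_iff_right hL.ne',
      sum_eq_zero_iff_of_nonneg fun r _ => mul_nonneg (hf0 r x) (hg0 r y χ)] at hc
    exact hc r (mem_univ r)
  have hsum := sum_le_sum fun (r : Fin K) (_ : r ∈ univ) =>
    sum_productMean_le h (hf0 r) (hf1 r) (hg0 r) (hg1 r) (hzero r)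
  rw [← Finset.mul_sum, sum_comm, sum_add_distrib, ← Finset.mul_sum, sum_const, card_univ,
    Fintype.card_fin, nsmul_eq_mul] at hsum
  have hupper : (d * N : ℕ) * ∑ r, productMean (f r) (g r) (fun _ => true) ≤ 4 := by
    rw [hprod]
    calc _ ≤ contextMean (d := d) (N := N) fun _ _ _ => 4 :=
          contextMean_mono fun v σ z => Finset.expect_le univ_nonempty fun a _ =>
            Finset.expect_le univ_nonempty fun b _ => cost_true_true_le h v σ a b z
      _ = 4 := by simp only [contextMean, Fintype.expect_const]
  have hlower : ∀ i, 17 / 9 ≤ (d * N : ℕ) * ∑ r, productMean (f r) (g r) (allBut i) := by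
    intro i
    rw [hprod]
    have hne : ∀ i : ZMod 5, i + 2 ≠ i + 3 ∧ i + 2 ≠ i + 4 ∧ i + 3 ≠ i + 4 := by decide
    calc (17 / 9 : ℝ) ≤ 2 - 2 * (1 / N + 1 / N + 1 / N) := by
          have : (1 / N : ℝ) ≤ 1 / 54 :=
            one_div_le_one_div_of_le (by norm_num) (by exact_mod_cast hN)
          linarith
      _ = contextMean (d := d) (N := N) fun v _ _ =>
          2 - 2 * ((if v (i + 2) = v (i + 3) then 1 else 0) +
            (if v (i + 2) = v (i + 4) then 1 else 0) +
            (if v (i + 3) = v (i + 4) then 1 else 0)) := by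
          simp only [contextMean, Fintype.expect_const, expect_sub_distrib, ← mul_expect,
            expect_add_distrib, expect_ite_eq_apply (hne i).1, expect_ite_eq_apply (hne i).2.1,
            expect_ite_eq_apply (hne i).2.2]
      _ ≤ _ := contextMean_mono fun v σ z => Finset.le_expect univ_nonempty fun a _ =>
            Finset.le_expect univ_nonempty fun b _ => le_cost_allBut_self h v σ a b z i
  have hlow := sum_le_sum fun (i : ZMod 5) (_ : i ∈ univ) => hlower i
  rw [← Finset.mul_sum, sum_const, card_univ, ZMod.card, nsmul_eq_mul] at hlow
  have := mul_le_mul_of_nonneg_left hsum hL.le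
  push_cast at *
  nlinarith

end Counting

section Formula

theorem exists_normalization {X Y : Type*} [Finite X] [Nonempty X] {f : X → ℝ} {g : Y → ℝ} {L : ℝ}
    (hL : 0 < L) (hf : ∀ x, 0 ≤ f x) (hg : ∀ y, 0 ≤ g y) (hfg : ∀ x y, f x * g y ≤ L) :
    ∃ (f' : X → ℝ) (g' : Y → ℝ), (∀ x, 0 ≤ f' x) ∧ (∀ x, f' x ≤ 1) ∧ (∀ y, 0 ≤ g' y) ∧
      (∀ y, g' y ≤ 1) ∧ ∀ x y, f x * g y = L * (f' x * g' y) := by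
  obtain ⟨m, hm⟩ := Finite.exists_max f
  rcases (hf m).eq_or_lt with h0 | h0
  · have hz : ∀ x, f x = 0 := fun x => le_antisymm ((hm x).trans h0.ge) (hf x)
    exact ⟨fun _ => 0, fun _ => 0, by simp, by simp, by simp, by simp, by simp [hz]⟩
  · refine ⟨fun x => f x / f m, fun y => f m * g y / L, fun x => div_nonneg (hf x) h0.le,
      fun x => (div_le_one h0).2 (hm x), fun y => div_nonneg (mul_nonneg h0.le (hg y)) hL.le,
      fun y => (div_le_one hL).2 (hfg m y), fun x y => ?_⟩
    field_simp

/-- The affine form `∑ v, (1 - ∑ α, c v α * p (e v α)) - 1`. -/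
def deficitForm {W A V : Type*} [Fintype W] [Fintype A] (c : W → A → ℝ) (e : W → A → V) :
    (V → ℝ) →ᵃ[ℝ] ℝ :=
  (-∑ v, ∑ α, c v α • LinearMap.proj (φ := fun _ : V => ℝ) (R := ℝ) (e v α)).toAffineMap +
    AffineMap.const ℝ (V → ℝ) ((∑ _v : W, (1 : ℝ)) - 1)

theorem deficitForm_apply {W A V : Type*} [Fintype W] [Fintype A] (c : W → A → ℝ) (e : W → A → V)
    (p : V → ℝ) : deficitForm c e p = ∑ v, (1 - ∑ α, c v α * p (e v α)) - 1 := by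
  simp only [deficitForm, AffineMap.coe_add, Pi.add_apply, LinearMap.coe_toAffineMap,
    AffineMap.const_apply, LinearMap.neg_apply, LinearMap.sum_apply, LinearMap.smul_apply,
    LinearMap.proj_apply, smul_eq_mul]
  rw [Finset.sum_sub_distrib (f := fun _ => (1 : ℝ))]
  ring

/-- A binary encoding of the edge values. -/
def encode : ZMod 4 ≃ (Bool → Bool) := Fintype.equivOfCardEq (by simp [ZMod.card])

/-- The variables: two bits for each edge, and one variable for each local labelling of a node. -/
abbrev LabelVar (d N : ℕ) := (Edge d N × Bool) ⊕ (Node d N × (Slot → ZMod 4))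

variable {d N : ℕ}

/-- The clause saying that a local labelling of a node is consistent with a bit of an edge. -/
def consistencyClause (t : (Node d N × (Slot → ZMod 4)) × (Slot × Bool)) :
    (LabelVar d N × Bool) × (LabelVar d N × Bool) :=
  ((Sum.inr t.1, false),
    (Sum.inl (incident t.1.1 t.2.1, t.2.2), encode (t.1.2 t.2.1) t.2.2))

/-- The satisfying assignment given by an edge labelling. -/
def labelAssignment (x : Edge d N → ZMod 4) : LabelVar d N → Bool
  | Sum.inl (e, c) => encode (x e) c
  | Sum.inr (v, α) => decide ((fun q => x (incident v q)) = α)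

/-- The local labellings compatible with the parity constraint at a node. -/
def IsLocallyValid (y : Edge d N → ZMod 4) (χ : Node d N → ZMod 2) (v : Node d N)
    (α : Slot → ZMod 4) : Prop :=
  ∑ q, gadget (α q + y (incident v q)) + χ v = 0

theorem isLocallyValid_incident_iff (x y : Edge d N → ZMod 4) (χ : Node d N → ZMod 2)
    (v : Node d N) : IsLocallyValid y χ v (fun q => x (incident v q)) ↔
      violation (fun e => x e + y e) χ v = 0 :=
  Iff.rfl

variable [NeZero d] [NeZero N]

/-- The formula relating edge labellings and local labellings of the nodes. -/
def labelFormula {V : Type} (e : LabelVar d N → V) : TwoSAT V where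
  clauses := (univ : Finset ((Node d N × (Slot → ZMod 4)) × (Slot × Bool))).toList.map fun t =>
    ((e (consistencyClause t).1.1, (consistencyClause t).1.2),
      (e (consistencyClause t).2.1, (consistencyClause t).2.2))

theorem length_clauses_labelFormula {V : Type} (e : LabelVar d N → V) :
    (labelFormula e).clauses.length = d * N * (4 ^ 20 * 40) := by
  simp only [labelFormula, List.length_map, length_toList, card_univ, Fintype.card_prod,
    Fintype.card_fun, ZMod.card, Fintype.card_bool]
  ring

theorem card_labelVar : Fintype.card (LabelVar d N) = d * N * (20 + 4 ^ 20) := by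
  simp only [Fintype.card_sum, Fintype.card_prod, Fintype.card_fun, ZMod.card, Fintype.card_bool]
  ring

theorem fst_ne_snd_of_mem_labelFormula {V : Type} {e : LabelVar d N → V}
    (he : Function.Injective e) : ∀ cl ∈ (labelFormula e).clauses, cl.1 ≠ cl.2 := by
  intro cl hcl
  obtain ⟨t, -, rfl⟩ := List.mem_map.1 hcl
  intro h
  have := he (congrArg Prod.fst h)
  simp [consistencyClause] at this

theorem labelFormula_sat_iff {V : Type} {e : LabelVar d N → V} {a : V → Bool} :
    (labelFormula e).Sat a ↔ ∀ v α, a (e (Sum.inr (v, α))) = true →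
      ∀ q c, a (e (Sum.inl (incident v q, c))) = encode (α q) c := by
  constructor
  · intro h v α hα q c
    have := h _ (List.mem_map.2 ⟨((v, α), (q, c)), mem_toList.2 (mem_univ _), rfl⟩)
    simpa [litSat, consistencyClause, hα] using this
  · intro h cl hcl
    obtain ⟨⟨⟨v, α⟩, q, c⟩, -, rfl⟩ := List.mem_map.1 hcl
    cases h1 : a (e (Sum.inr (v, α)))
    · exact Or.inl h1
    · exact Or.inr (h v α h1 q c)

open Classical in
/-- The number of nodes without a valid local labelling, beyond the first. -/
def costForm {V : Type} (e : LabelVar d N → V) (y : Edge d N → ZMod 4) (χ : Node d N → ZMod 2) :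
    (V → ℝ) →ᵃ[ℝ] ℝ :=
  deficitForm (fun v α => if IsLocallyValid y χ v α then (1 : ℝ) else 0)
    fun v α => e (Sum.inr (v, α))

open Classical in
theorem costForm_apply {V : Type} (e : LabelVar d N → V) (y : Edge d N → ZMod 4)
    (χ : Node d N → ZMod 2) (p : V → ℝ) : costForm e y χ p =
      ∑ v, (1 - ∑ α, if IsLocallyValid y χ v α then p (e (Sum.inr (v, α))) else 0) - 1 := by
  rw [costForm, deficitForm_apply]
  simp only [ite_mul, one_mul, zero_mul]

open Classical in
theorem cost_eq_sum (x y : Edge d N → ZMod 4) (χ : Node d N → ZMod 2) :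
    cost x y χ = ∑ v, (1 - if violation (fun e => x e + y e) χ v = 0 then (1 : ℝ) else 0) - 1 := by
  rw [cost, card_filter]
  push_cast
  congr 1
  refine sum_congr rfl fun v _ => ?_
  split_ifs with h1 h2 <;> simp_all

theorem costForm_labelAssignment {V : Type} (e : LabelVar d N ≃ V) (x y : Edge d N → ZMod 4)
    (χ : Node d N → ZMod 2) :
    costForm e y χ (fun k => if labelAssignment x (e.symm k) then 1 else 0) = cost x y χ := by
  classical
  rw [costForm_apply, cost_eq_sum]
  congr 1
  refine sum_congr rfl fun v _ => ?_
  congr 1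
  rw [sum_eq_single fun q => x (incident v q)]
  · simp [labelAssignment, isLocallyValid_incident_iff]
  · intro α _ hα
    simp [labelAssignment, hα.symm]
  · simp

theorem costForm_nonneg {V : Type} [Fintype V] (e : LabelVar d N → V) (y : Edge d N → ZMod 4)
    {χ : Node d N → ZMod 2} (hχ : ∑ u, χ u = 1) {p : V → ℝ} (hp : p ∈ SATpoly (labelFormula e)) :
    0 ≤ costForm e y χ p := by
  classical
  have hconv : Convex ℝ (costForm e y χ ⁻¹' Set.Ici 0) := (convex_Ici 0).affine_preimage _
  refine convexHull_min ?_ hconv hp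
  rintro _ ⟨a, ha, rfl⟩
  rw [labelFormula_sat_iff] at ha
  rw [Set.mem_preimage, Set.mem_Ici]
  let x : Edge d N → ZMod 4 := fun ed => encode.symm fun c => a (e (Sum.inl (ed, c)))
  have hx : ∀ v α, a (e (Sum.inr (v, α))) = true → (fun q => x (incident v q)) = α := by
    intro v α h
    ext q
    rw [Equiv.symm_apply_eq]
    exact funext fun c => ha v α h q c
  refine (cost_nonneg x y hχ).trans ?_
  rw [costForm_apply, cost_eq_sum]
  refine sub_le_sub_right (sum_le_sum fun v _ => sub_le_sub_left ?_ _) _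
  rw [sum_eq_single fun q => x (incident v q)]
  · rw [isLocallyValid_incident_iff]
    split_ifs <;> norm_num
  · intro α _ hα
    have : a (e (Sum.inr (v, α))) = false := by
      by_contra h
      exact hα (hx v α (by simpa using h)).symm
    simp [this]
  · simp

theorem finite_satisfying {V : Type} [Fintype V] (Φ : TwoSAT V) :
    {x : V → ℝ | ∃ a : V → Bool, Φ.Sat a ∧ x = fun v => if a v then (1 : ℝ) else 0}.Finite :=
  (Set.finite_range fun (a : V → Bool) (v : V) => if a v then (1 : ℝ) else 0).subset
    fun _ ⟨a, _, h⟩ => ⟨a, h.symm⟩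

theorem isEF_xc_SATpoly {V : Type} [Fintype V] (Φ : TwoSAT V) :
    IsEF (SATpoly Φ) (xc (SATpoly Φ)) :=
  Nat.sInf_mem (exists_isEF_convexHull (finite_satisfying Φ))

/-- A lower bound for the extension complexity of the label formula. -/
theorem one_le_xc_mul_smallError (h : N ≤ 2 ^ d) (hN : 54 ≤ N) {V : Type} [Fintype V]
    (e : LabelVar d N ≃ V) :
    1 ≤ 50 * (((xc (SATpoly (labelFormula e)) + 1 : ℕ) : ℝ) * smallError N * (d * N : ℕ)) := by
  classical
  have hL : (0 : ℝ) < (d * N : ℕ) := by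
    exact_mod_cast Nat.mul_pos (NeZero.pos d) (NeZero.pos N)
  let Y := (Edge d N → ZMod 4) × {χ : Node d N → ZMod 2 // ∑ u, χ u = 1}
  obtain ⟨f, g, hf, hg, hfg⟩ := (isEF_xc_SATpoly (labelFormula e)).exists_factorization
    (X := Edge d N → ZMod 4) (Y := Y)
    (fun x k => if labelAssignment x (e.symm k) then 1 else 0)
    (fun x => by
      refine subset_convexHull ℝ _ ⟨fun k => labelAssignment x (e.symm k), ?_, rfl⟩
      rw [labelFormula_sat_iff]
      intro v α hα q c
      simp only [Equiv.symm_apply_apply, labelAssignment, decide_eq_true_eq] at hα ⊢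
      rw [← hα])
    (fun y => costForm e y.1 y.2.1) (fun y p hp => costForm_nonneg e y.1 y.2.2 hp)
  simp only [costForm_labelAssignment] at hfg
  have hle : ∀ r x y, f r x * g r y ≤ (d * N : ℕ) := fun r x y =>
    (single_le_sum (f := fun r => f r x * g r y)
      (fun r _ => mul_nonneg (hf r x) (hg r y)) (mem_univ r)).trans
      ((hfg x y).ge.trans (cost_le_card _ _ _))
  choose f' g' hf0 hf1 hg0 hg1 hfg' using fun r =>
    exists_normalization hL (hf r) (hg r) (hle r)
  refine one_le_card_mul_smallError h hN f'
    (fun r y χ => if hχ : ∑ u, χ u = 1 then g' r (y, ⟨χ, hχ⟩) else 0) hf0 hf1 ?_ ?_ ?_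
  · intro r y χ
    split_ifs with hχ
    · exact hg0 r _
    · exact le_rfl
  · intro r y χ
    split_ifs with hχ
    · exact hg1 r _
    · exact zero_le_one
  · intro x y χ hχ
    simp only [hχ, dif_pos]
    rw [hfg x (y, ⟨χ, hχ⟩), Finset.mul_sum]
    exact sum_congr rfl fun r _ => hfg' r x (y, ⟨χ, hχ⟩)

end Formula


lemma exists_threshold_sq_le_exp :
    ∃ N₀ : ℕ, 54 ≤ N₀ ∧ ∀ N : ℕ, N₀ ≤ N → 20000 * (N : ℝ) ^ 2 ≤ Real.exp (N / 40000) := by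
  have lim : Filter.Tendsto (fun N : ℕ => (N : ℝ) / 40000) Filter.atTop Filter.atTop :=
    tendsto_natCast_atTop_atTop.atTop_div_const (by norm_num)
  have ev := ((Real.tendsto_exp_div_pow_atTop 2).comp lim).eventually_ge_atTop
    (20000 * 40000 ^ 2)
  obtain ⟨N₀, hN₀⟩ := Filter.eventually_atTop.1 ev
  refine ⟨max N₀ 54, le_max_right _ _, fun N hN => ?_⟩
  have pos : (0 : ℝ) < N := by
    exact_mod_cast lt_of_lt_of_le (by norm_num) ((le_max_right N₀ 54).trans hN)
  have h := hN₀ N ((le_max_left _ _).trans hN)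
  rw [Function.comp_apply, le_div_iff₀ (by positivity)] at h
  calc 20000 * (N : ℝ) ^ 2 = 20000 * 40000 ^ 2 * (N / 40000) ^ 2 := by ring
    _ ≤ _ := h

lemma exp_le_xc_labelFormula {d N : ℕ} [NeZero d] [NeZero N] (h : N ≤ 2 ^ d) (hdN : d ≤ N)
    (hN : 54 ≤ N) (large : 20000 * (N : ℝ) ^ 2 ≤ Real.exp (N / 40000))
    {V : Type} [Fintype V] (e : LabelVar d N ≃ V) :
    Real.exp (N / 40000) ≤ xc (SATpoly (labelFormula e)) := by
  have key := one_le_xc_mul_smallError h hN e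
  set X := xc (SATpoly (labelFormula e))
  set E := Real.exp (N / 40000) with hE
  have one_le : 1 ≤ E := Real.one_le_exp (by positivity)
  have small : smallError N = 200 / E ^ 2 := by
    rw [smallError, hE, ← Real.exp_nat_mul, Real.exp_neg, div_eq_mul_inv]
    congr 3
    push_cast
    ring
  have size : ((d * N : ℕ) : ℝ) ≤ (N : ℝ) ^ 2 := by
    rw [sq]
    exact_mod_cast Nat.mul_le_mul_right N hdN
  rw [small] at key
  have bound : 1 ≤ ((X : ℝ) + 1) / (2 * E) := by
    calc (1 : ℝ) ≤ 50 * (((X + 1 : ℕ) : ℝ) * (200 / E ^ 2) * (d * N : ℕ)) := key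
      _ ≤ 50 * (((X + 1 : ℕ) : ℝ) * (200 / E ^ 2) * (E / 20000)) := by
        gcongr
        linarith
      _ = ((X : ℝ) + 1) / (2 * E) := by
        push_cast
        field_simp
        ring
  rw [le_div_iff₀ (by positivity)] at bound
  linarith

lemma two_rpow_le_exp {t : ℝ} (ht : 0 ≤ t) : (2 : ℝ) ^ t ≤ Real.exp t := by
  rw [Real.rpow_def_of_pos two_pos, Real.exp_le_exp]
  nlinarith [Real.log_two_lt_d9]

lemma natLog_add_one_le {n N : ℕ} {a : ℝ} (hn : 2 ≤ n) (hN : 0 < N) (ha : 1 ≤ a)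
    (h : (N : ℝ) ≤ n * a) :
    ((Nat.log 2 N + 1 : ℕ) : ℝ) ≤ (4 + 4 * Real.log a) * Real.log n := by
  have log_two := Real.log_two_gt_d9
  have hn' : (2 : ℝ) ≤ n := by exact_mod_cast hn
  have log_n : Real.log 2 ≤ Real.log n := Real.log_le_log two_pos hn'
  have log_a : 0 ≤ Real.log a := Real.log_nonneg ha
  have pow_le : ((2 : ℝ) ^ Nat.log 2 N) ≤ n * a :=
    le_trans (by exact_mod_cast Nat.pow_log_le_self 2 hN.ne') h
  have := Real.log_le_log (by positivity) pow_le
  rw [Real.log_pow, Real.log_mul (by positivity) (by positivity)] at this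
  push_cast
  have hk : (0 : ℝ) ≤ Nat.log 2 N := by positivity
  nlinarith

/-- There are 2-SAT formulas with `O(n)` variables and clauses (each clause having exactly
two literals) whose satisfying-assignment polytope has extension complexity
at least `2^(c·n/log n)`. -/
theorem twoSAT_large_xc :
    ∃ c C : ℝ, 0 < c ∧ 1 ≤ C ∧ ∀ n : ℕ, 2 ≤ n →
      ∃ (N : ℕ) (Φ : TwoSAT (Fin N)),
        (N : ℝ) ≤ C * n ∧
        (Φ.clauses.length : ℝ) ≤ C * n ∧
        (∀ cl ∈ Φ.clauses, cl.1 ≠ cl.2) ∧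
        (2 : ℝ) ^ (c * n / Real.log n) ≤ (xc (SATpoly Φ) : ℝ) := by
  obtain ⟨N₀, hN₀, large⟩ := exists_threshold_sq_le_exp
  have log_nonneg : 0 ≤ Real.log (2 * (1 + N₀)) :=
    Real.log_nonneg (by linarith [Nat.cast_nonneg (α := ℝ) N₀])
  set K : ℝ := (4 + 4 * Real.log (2 * (1 + N₀))) * (1 + N₀) with hK
  have one_le_K : 1 ≤ K := by
    have : (0 : ℝ) ≤ N₀ := Nat.cast_nonneg _
    nlinarith [mul_nonneg log_nonneg this]
  refine ⟨1 / 40000, K * (4 ^ 20 * 40), by norm_num, by linarith, fun n hn => ?_⟩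
  have hn' : (2 : ℝ) ≤ n := by exact_mod_cast hn
  have log_pos : 0 < Real.log n := Real.log_pos (by linarith)
  set x : ℝ := n / Real.log n with hx
  have one_le_x : 1 ≤ x := by
    rw [hx, one_le_div log_pos]
    linarith [Real.log_le_sub_one_of_pos (show (0 : ℝ) < n by linarith)]
  set N : ℕ := ⌊x⌋₊ + N₀ with hN
  have N_le : (N : ℝ) ≤ x * (1 + N₀) := by
    have := Nat.floor_le (show 0 ≤ x by linarith)
    have : (0 : ℝ) ≤ N₀ := Nat.cast_nonneg _
    rw [hN]
    push_cast
    nlinarith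
  have le_N : x ≤ N := by
    have h₁ := Nat.lt_floor_add_one x
    have h₂ : (1 : ℝ) ≤ N₀ := by exact_mod_cast (show 1 ≤ N₀ by omega)
    rw [hN]
    push_cast
    linarith
  have N_pos : 0 < N := by omega
  set d : ℕ := Nat.log 2 N + 1 with hd
  have d_le : (d : ℝ) ≤ (4 + 4 * Real.log (2 * (1 + N₀))) * Real.log n := by
    refine natLog_add_one_le hn N_pos (by linarith [Nat.cast_nonneg (α := ℝ) N₀]) (N_le.trans ?_)
    have x_le : x ≤ 2 * n := by
      rw [hx, div_le_iff₀ log_pos]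
      nlinarith [Real.log_two_gt_d9, Real.log_le_log two_pos hn']
    calc x * (1 + N₀) ≤ 2 * n * (1 + N₀) := by gcongr
      _ = n * (2 * (1 + N₀)) := by ring
  have size : ((d * N : ℕ) : ℝ) ≤ K * n := by
    push_cast
    calc (d : ℝ) * N ≤ (4 + 4 * Real.log (2 * (1 + N₀))) * Real.log n * (x * (1 + N₀)) := by gcongr
      _ = K * n := by
        rw [hK, hx]
        field_simp
  have : NeZero N := ⟨N_pos.ne'⟩
  have : NeZero d := ⟨by omega⟩
  let e := Fintype.equivFin (LabelVar d N)
  refine ⟨_, labelFormula e, ?_, ?_, fst_ne_snd_of_mem_labelFormula e.injective, ?_⟩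
  · rw [card_labelVar]
    push_cast at size ⊢
    nlinarith
  · rw [length_clauses_labelFormula]
    push_cast at size ⊢
    nlinarith
  · have pow : N ≤ 2 ^ d := (Nat.lt_pow_succ_log_self (by norm_num) N).le
    have d_le_N : d ≤ N := Nat.log_lt_self 2 N_pos.ne'
    refine le_trans ?_ (exp_le_xc_labelFormula pow d_le_N (by omega) (large N (by omega)) e)
    rw [show 1 / 40000 * (n : ℝ) / Real.log n = x / 40000 by rw [hx]; ring]
    refine (two_rpow_le_exp (by positivity)).trans (Real.exp_le_exp.2 ?_)
    gcongr
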